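/- For every ε > 0 there exists δ > 0 with the following property: if (n,u,φ) is a global classical L²-compact solution of the 1D Euler–Poisson system (EPw), with shift function y ∈ C¹(ℝ,ℝ), which conserves the energy E and satisfies inf_{t∈ℝ} |y'(t)| > √(1+k) + ε and sup_{t∈ℝ} (‖n(t)‖_{H¹} + ‖u(t)‖_{H¹}) < δ, then (n,u,φ) is identically zero. -/

import Mathlib

open MeasureTheory Real
open scoped ENNReal

noncomputable section

def sech (x : ℝ) : ℝ := (Real.cosh x)⁻¹

def qfun (x : ℝ) : ℝ := Real.exp x - 1

structure IsPressure (p : ℝ → ℝ) : Prop where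
  smooth : ContDiffOn ℝ (⊤ : ℕ∞) p (Set.Ioi (0 : ℝ))
  deriv_pos : ∀ s : ℝ, 0 < s → 0 < deriv p s
  deriv2_nonneg : ∀ s : ℝ, 0 < s → 0 ≤ deriv (deriv p) s

def IsWFor (p w : ℝ → ℝ) : Prop :=
  w 0 = 0 ∧ ∀ s : ℝ, -1 < s → HasDerivAt w (deriv p (1 + s) / (1 + s)) s

def Wfun (w : ℝ → ℝ) (a : ℝ) : ℝ := ∫ s in (0:ℝ)..a, w s

def Rfun (x : ℝ) : ℝ := x * qfun x - ∫ s in (0:ℝ)..x, qfun s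

def energyDensity (w : ℝ → ℝ) (n u φ : ℝ → ℝ) (x : ℝ) : ℝ :=
  (1/2) * (1 + n x) * u x ^ 2 + Wfun w (n x) + (1/2) * (deriv φ x) ^ 2 + Rfun (φ x)

def energy (w : ℝ → ℝ) (n u φ : ℝ → ℝ) : ℝ := ∫ x : ℝ, energyDensity w n u φ x

structure IsEPwSolution (w : ℝ → ℝ) (n u φ : ℝ → ℝ → ℝ) : Prop where
  dens_pos : ∀ t x : ℝ, 0 < 1 + n t x
  reg_n : ContDiff ℝ 1 (Function.uncurry n)
  reg_u : ContDiff ℝ 1 (Function.uncurry u)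
  reg_phi_space : ∀ t : ℝ, ContDiff ℝ 2 (φ t)
  reg_phi_time : ∀ x : ℝ, ContDiff ℝ 1 (fun t => φ t x)
  eq_n : ∀ t x : ℝ, deriv (fun s => n s x) t = - deriv (fun z => (1 + n t z) * u t z) x
  eq_u : ∀ t x : ℝ, deriv (fun s => u s x) t
      = - deriv (fun z => u t z ^ 2 / 2 + w (n t z) + φ t z) x
  eq_phi : ∀ t x : ℝ, - deriv (deriv (φ t)) x + qfun (φ t x) = n t x

def ConservesEnergy (w : ℝ → ℝ) (n u φ : ℝ → ℝ → ℝ) : Prop :=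
  ∀ t₁ t₂ : ℝ, energy w (n t₁) (u t₁) (φ t₁) = energy w (n t₂) (u t₂) (φ t₂)

def L2CompactWith (n u : ℝ → ℝ → ℝ) (y : ℝ → ℝ) : Prop :=
  ∀ ε : ℝ, 0 < ε → ∃ R : ℝ, 0 < R ∧
    ∀ t : ℝ, (∫ x in {x : ℝ | R < |x - y t|}, (n t x ^ 2 + u t x ^ 2)) < ε

/-- the (squared-sum) `H¹` Sobolev norm, valued in `ℝ≥0∞` -/
def H1norm (f : ℝ → ℝ) : ℝ≥0∞ :=
  (eLpNorm f 2 volume ^ 2 + eLpNorm (deriv f) 2 volume ^ 2) ^ (1/2 : ℝ)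

/-!
The energy to the right of the front `x = σ t`, with `σ` slightly above the sound speed `√(1 + k)`
and a smooth, slowly varying transition at the front, is nonincreasing in time: a wave of small
amplitude carries a flux of energy at most `σ` times its energy. For an `L²`-compact solution whose
center moves faster than `σ` this energy tends to `0` as `t → -∞` and to the total energy as
`t → ∞`, so the total energy vanishes, and with it the solution. Leftward motion is reduced to
rightward motion by time reversal.

The potential `φ` is not assumed to have a time derivative for which the energy can be
differentiated. The monotonicity is obtained from `V t - V s ≤ C * (t - s) ^ 2` for the localized
energy `V`, and the potentials at two times are compared by means of the displacement
`K = ∫ τ in s..t, (1 + n τ) * u τ`, which satisfies `K' = n s - n t`.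
-/

/-! ### Real analysis -/

lemma mul_sub_le_sub_of_le_hasDerivAt {g g' : ℝ → ℝ} (hg : ∀ x, HasDerivAt g (g' x) x)
    {a b c : ℝ} (hab : a ≤ b) (h : ∀ x, a < x → x < b → c ≤ g' x) :
    c * (b - a) ≤ g b - g a := by
  refine (convex_Icc a b).mul_sub_le_image_sub_of_le_deriv
    (fun x _ => (hg x).continuousAt.continuousWithinAt)
    (fun x _ => (hg x).differentiableAt.differentiableWithinAt) (fun x hx => ?_)
    a (Set.left_mem_Icc.2 hab) b (Set.right_mem_Icc.2 hab) hab
  rw [interior_Icc] at hx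
  rw [(hg x).deriv]
  exact h x hx.1 hx.2

lemma continuous_of_forall_hasDerivAt {f f' : ℝ → ℝ} (hf : ∀ x, HasDerivAt f (f' x) x) :
    Continuous f :=
  continuous_iff_continuousAt.2 fun x => (hf x).continuousAt

lemma antitone_of_sub_le_mul_sq {V : ℝ → ℝ} {C : ℝ}
    (h : ∀ s t, s ≤ t → V t - V s ≤ C * (t - s) ^ 2) : Antitone V := by
  have halved : ∀ m : ℕ, ∀ s t, s ≤ t → V t - V s ≤ C * (t - s) ^ 2 / 2 ^ m := by
    intro m
    induction m with
    | zero => simpa using h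
    | succ m ih =>
      intro s t hst
      have left := ih s ((s + t) / 2) (by linarith)
      have right := ih ((s + t) / 2) t (by linarith)
      calc V t - V s ≤ C * ((s + t) / 2 - s) ^ 2 / 2 ^ m + C * (t - (s + t) / 2) ^ 2 / 2 ^ m := by
            linarith
        _ = C * (t - s) ^ 2 / 2 ^ (m + 1) := by rw [pow_succ]; field_simp; ring
  intro s t hst
  have hlim : Filter.Tendsto (fun m : ℕ => C * (t - s) ^ 2 / 2 ^ m) Filter.atTop (nhds 0) :=
    tendsto_const_nhds.div_atTop (tendsto_pow_atTop_atTop_of_one_lt one_lt_two)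
  linarith [ge_of_tendsto' hlim fun m => halved m s t hst]

lemma sq_intervalIntegral_le_mul_integral_sq {f : ℝ → ℝ} (hf : Continuous f) {s t : ℝ}
    (hst : s ≤ t) : (∫ τ in s..t, f τ) ^ 2 ≤ (t - s) * ∫ τ in s..t, f τ ^ 2 := by
  rcases hst.eq_or_lt with rfl | hlt
  · simp
  have hlen : 0 < t - s := sub_pos.2 hlt
  have jensen := (even_two.convexOn_pow (𝕜 := ℝ)).map_set_average_le (t := Set.Ioc s t)
    (μ := volume) (f := f)
    (continuous_pow 2).continuousOn isClosed_univ (by simp [hlt]) (by simp) (by simp)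
    hf.integrableOn_Ioc (hf.pow 2).integrableOn_Ioc
  simp only [setAverage_eq, smul_eq_mul, Real.volume_real_Ioc_of_le hst,
    ← intervalIntegral.integral_of_le hst] at jensen
  rw [mul_pow, inv_pow, inv_mul_le_iff₀ (pow_pos hlen 2)] at jensen
  calc (∫ τ in s..t, f τ) ^ 2 ≤ (t - s) ^ 2 * ((t - s)⁻¹ * ∫ τ in s..t, f τ ^ 2) := jensen
    _ = (t - s) * ∫ τ in s..t, f τ ^ 2 := by field_simp

lemma sq_le_integral_sq_add_integral_deriv_sq {f f' : ℝ → ℝ} (hf : ∀ x, HasDerivAt f (f' x) x)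
    (hf2 : MemLp f 2) (hf'2 : MemLp f' 2) (x : ℝ) :
    f x ^ 2 ≤ (∫ y, f y ^ 2) + ∫ y, f' y ^ 2 := by
  have hderiv : ∀ y, HasDerivAt (fun y => f y ^ 2) (2 * (f y * f' y)) y := fun y =>
    ((hf y).pow 2).congr_deriv (by push_cast; ring)
  have hint : Integrable fun y => 2 * (f y * f' y) := (hf2.integrable_mul hf'2).const_mul 2
  have hsum : Integrable fun y => f y ^ 2 + f' y ^ 2 := hf2.integrable_sq.add hf'2.integrable_sq
  have hbot : Filter.Tendsto (fun y => f y ^ 2) Filter.atBot (nhds 0) :=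
    tendsto_zero_of_hasDerivAt_of_integrableOn_Iic (a := x) (fun y _ => hderiv y)
      hint.integrableOn hf2.integrable_sq.integrableOn
  calc f x ^ 2 = ∫ y in Set.Iic x, 2 * (f y * f' y) := by
        rw [integral_Iic_of_hasDerivAt_of_tendsto' (fun y _ => hderiv y) hint.integrableOn hbot,
          sub_zero]
    _ ≤ ∫ y in Set.Iic x, (f y ^ 2 + f' y ^ 2) :=
        integral_mono hint.integrableOn hsum.integrableOn fun y => by
          nlinarith [sq_nonneg (f y - f' y)]
    _ ≤ ∫ y, (f y ^ 2 + f' y ^ 2) :=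
        setIntegral_le_integral hsum (.of_forall fun y => add_nonneg (sq_nonneg _) (sq_nonneg _))
    _ = _ := integral_add hf2.integrable_sq hf'2.integrable_sq

lemma abs_sub_half_mul_sq_le {G g : ℝ → ℝ} {β θ d : ℝ} (hG0 : G 0 = 0)
    (hG : ∀ a, |a| ≤ d → HasDerivAt G (g a) a) (hg : ∀ a, |a| ≤ d → |g a - β * a| ≤ θ * |a|)
    {a : ℝ} (ha : |a| ≤ d) : |G a - β * a ^ 2 / 2| ≤ θ / 2 * a ^ 2 := by
  have hball : ∀ r ∈ Set.Icc (0 : ℝ) 1, |r * a| ≤ d := fun r hr => by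
    rw [abs_mul, abs_of_nonneg hr.1]
    exact (mul_le_of_le_one_left (abs_nonneg a) hr.2).trans ha
  have hline : ∀ r : ℝ, HasDerivAt (fun r : ℝ => r * a) a r := fun r => by
    simpa using (hasDerivAt_id r).mul_const a
  have hremainder : ∀ r ∈ Set.Icc (0 : ℝ) 1,
      HasDerivAt (fun r => G (r * a) - β * (r * a) ^ 2 / 2) ((g (r * a) - β * (r * a)) * a) r :=
    fun r hr => (((hG _ (hball r hr)).comp r (hline r)).sub
      ((((hline r).pow 2).const_mul β).div_const 2)).congr_deriv (by push_cast; ring)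
  have hbound : ∀ r : ℝ, HasDerivAt (fun r : ℝ => θ / 2 * (r * a) ^ 2) (θ * r * a ^ 2) r :=
    fun r => (((hline r).pow 2).const_mul (θ / 2)).congr_deriv (by push_cast; ring)
  have hle := image_norm_le_of_norm_deriv_right_le_deriv_boundary
    (fun r hr => (hremainder r hr).continuousAt.continuousWithinAt)
    (fun r hr => (hremainder r (Set.Ico_subset_Icc_self hr)).hasDerivWithinAt)
    (by simp [hG0]) hbound
    (fun r hr => by
      rw [norm_mul, Real.norm_eq_abs, Real.norm_eq_abs]
      calc |g (r * a) - β * (r * a)| * |a| ≤ θ * |r * a| * |a| :=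
            mul_le_mul_of_nonneg_right (hg _ (hball r (Set.Ico_subset_Icc_self hr))) (abs_nonneg a)
        _ = θ * r * a ^ 2 := by rw [abs_mul, abs_of_nonneg hr.1, ← sq_abs a]; ring)
    (Set.right_mem_Icc.2 zero_le_one)
  simpa using hle

lemma deriv_le_of_abs_le_of_abs_deriv2_le {f f' f'' : ℝ → ℝ} (hf : ∀ x, HasDerivAt f (f' x) x)
    (hf' : ∀ x, HasDerivAt f' (f'' x) x) {A B : ℝ} (hA : ∀ x, |f x| ≤ A) (hB : ∀ x, |f'' x| ≤ B)
    (x : ℝ) : f' x ≤ 2 * A + B := by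
  have hnear : ∀ y, x < y → y < x + 1 → f' x - B ≤ f' y := fun y hxy hy => by
    have hdrop := mul_sub_le_sub_of_le_hasDerivAt hf' hxy.le fun z _ _ => (abs_le.1 (hB z)).1
    have hBnonneg : 0 ≤ B := (abs_nonneg _).trans (hB x)
    nlinarith
  have hrise := mul_sub_le_sub_of_le_hasDerivAt hf (by linarith) hnear
  linarith [(abs_le.1 (hA x)).1, (abs_le.1 (hA (x + 1))).2]

lemma abs_deriv_le_of_abs_le_of_abs_deriv2_le {f f' f'' : ℝ → ℝ}
    (hf : ∀ x, HasDerivAt f (f' x) x) (hf' : ∀ x, HasDerivAt f' (f'' x) x) {A B : ℝ}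
    (hA : ∀ x, |f x| ≤ A) (hB : ∀ x, |f'' x| ≤ B) (x : ℝ) : |f' x| ≤ 2 * A + B :=
  abs_le'.2 ⟨deriv_le_of_abs_le_of_abs_deriv2_le hf hf' hA hB x,
    deriv_le_of_abs_le_of_abs_deriv2_le (fun x => (hf x).neg) (fun x => (hf' x).neg)
      (fun x => by simpa using hA x) (fun x => by simpa using hB x) x⟩

lemma mul_sub_le_deriv_of_le_deriv2 {f f' f'' : ℝ → ℝ} (hf : ∀ x, HasDerivAt f (f' x) x)
    (hf' : ∀ x, HasDerivAt f' (f'' x) x) {m c a : ℝ} (hc : 0 ≤ c)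
    (hm : ∀ x, m ≤ f x → c ≤ f'' x) (ha : m ≤ f a) (ha' : 0 < f' a) {x : ℝ} (hx : a ≤ x) :
    c * (x - a) ≤ f' x := by
  have grows : ∀ y, a ≤ y → (∀ z, a < z → z < y → 0 ≤ f' z) → c * (y - a) ≤ f' y - f' a :=
    fun y hay hpos => mul_sub_le_sub_of_le_hasDerivAt hf' hay fun z haz hzy => hm z <| by
      have := mul_sub_le_sub_of_le_hasDerivAt hf haz.le
        fun v hav hvz => hpos v hav (hvz.trans hzy)
      linarith
  have hpos : ∀ y, a ≤ y → 0 < f' y := by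
    by_contra! hneg
    obtain ⟨y, hay, hy⟩ := hneg
    have hcompact : IsCompact (Set.Icc a y ∩ {z | f' z ≤ 0}) := isCompact_Icc.inter_right
      (isClosed_le (continuous_of_forall_hasDerivAt hf') continuous_const)
    obtain ⟨z, ⟨⟨haz, hzy⟩, hz⟩, hleast⟩ :=
      hcompact.exists_isLeast ⟨y, Set.right_mem_Icc.2 hay, hy⟩
    have hbefore : ∀ v, a < v → v < z → 0 ≤ f' v := fun v hav hvz => by
      by_contra! hv
      exact hvz.not_ge (hleast ⟨⟨hav.le, hvz.le.trans hzy⟩, hv.le⟩)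
    have := grows z haz hbefore
    have := mul_nonneg hc (sub_nonneg.2 haz)
    linarith [hz.out]
  linarith [grows x hx fun z haz _ => (hpos z haz.le).le]

/-! ### Functions of time and space -/

lemma continuous_slice {f : ℝ → ℝ → ℝ} (hf : Continuous (Function.uncurry f)) (t : ℝ) :
    Continuous (f t) :=
  hf.comp (.prodMk_right t)

lemma continuous_time {f : ℝ → ℝ → ℝ} (hf : Continuous (Function.uncurry f)) (x : ℝ) :
    Continuous fun t => f t x :=
  hf.comp (.prodMk_left x)

/-- The partial derivative `∂ₜ f` of a function of time and space. -/
def timeDeriv (f : ℝ → ℝ → ℝ) (t x : ℝ) : ℝ := deriv (fun s => f s x) t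

/-- The partial derivative `∂ₓ f` of a function of time and space. -/
def spaceDeriv (f : ℝ → ℝ → ℝ) (t x : ℝ) : ℝ := deriv (f t) x

lemma hasDerivAt_timeDeriv {f : ℝ → ℝ → ℝ} (hf : ContDiff ℝ 1 (Function.uncurry f)) (t x : ℝ) :
    HasDerivAt (fun s => f s x) (timeDeriv f t x) t :=
  ((hf.comp (contDiff_prodMk_left x)).differentiable one_ne_zero t).hasDerivAt

lemma hasDerivAt_spaceDeriv {f : ℝ → ℝ → ℝ} (hf : ContDiff ℝ 1 (Function.uncurry f)) (t x : ℝ) :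
    HasDerivAt (f t) (spaceDeriv f t x) x :=
  ((hf.comp (contDiff_prodMk_right t)).differentiable one_ne_zero x).hasDerivAt

lemma continuous_timeDeriv {f : ℝ → ℝ → ℝ} (hf : ContDiff ℝ 1 (Function.uncurry f)) :
    Continuous (Function.uncurry (timeDeriv f)) := by
  have hderiv : Function.uncurry (timeDeriv f) =
      fun q => fderiv ℝ (Function.uncurry f) q (1, 0) := funext fun ⟨t, x⟩ =>
    ((hf.differentiable one_ne_zero (t, x)).hasFDerivAt.comp_hasDerivAt (f := fun s => (s, x)) t
      ((hasDerivAt_id' t).prodMk (hasDerivAt_const t x))).deriv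
  rw [hderiv]
  exact (hf.continuous_fderiv one_ne_zero).clm_apply continuous_const

lemma continuous_spaceDeriv {f : ℝ → ℝ → ℝ} (hf : ContDiff ℝ 1 (Function.uncurry f)) :
    Continuous (Function.uncurry (spaceDeriv f)) := by
  have hderiv : Function.uncurry (spaceDeriv f) =
      fun q => fderiv ℝ (Function.uncurry f) q (0, 1) := funext fun ⟨t, x⟩ =>
    ((hf.differentiable one_ne_zero (t, x)).hasFDerivAt.comp_hasDerivAt (f := fun z => (t, z)) x
      ((hasDerivAt_const x t).prodMk (hasDerivAt_id' x))).deriv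
  rw [hderiv]
  exact (hf.continuous_fderiv one_ne_zero).clm_apply continuous_const

lemma continuous_uncurry_of_hasDerivAt {f f' : ℝ → ℝ → ℝ} {x₀ : ℝ}
    (hf : ∀ t x, HasDerivAt (f t) (f' t x) x) (hf' : Continuous (Function.uncurry f'))
    (hf₀ : Continuous fun t => f t x₀) : Continuous (Function.uncurry f) := by
  have hprimitive : Function.uncurry f = fun q : ℝ × ℝ => f q.1 x₀ + ∫ z in x₀..q.2, f' q.1 z :=
    funext fun ⟨t, x⟩ => by
      rw [intervalIntegral.integral_eq_sub_of_hasDerivAt (fun z _ => hf t z)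
        ((continuous_slice hf' t).intervalIntegrable _ _)]
      simp
  rw [hprimitive]
  exact (hf₀.comp continuous_fst).add
    (intervalIntegral.continuous_parametric_primitive_of_continuous hf')

lemma hasDerivAt_integral_flux {q q' F : ℝ → ℝ → ℝ} (hqc : ∀ t, Continuous (q t))
    (hq : ∀ t x, HasDerivAt (fun s => q s x) (q' t x) t) (hq' : Continuous (Function.uncurry q'))
    (hF : ∀ t x, HasDerivAt (F t) (-q' t x) x) (hFc : ∀ x, Continuous fun t => F t x)
    (s t x : ℝ) : HasDerivAt (fun z => ∫ τ in s..t, F τ z) (q s x - q t x) x := by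
  have hswap : ∀ z, (∫ y in (0 : ℝ)..z, (q s y - q t y)) =
      (∫ τ in s..t, F τ z) - ∫ τ in s..t, F τ 0 := fun z => by
    calc (∫ y in (0 : ℝ)..z, (q s y - q t y)) = ∫ y in (0 : ℝ)..z, ∫ τ in s..t, -q' τ y :=
          intervalIntegral.integral_congr fun y _ => by
            rw [intervalIntegral.integral_neg, intervalIntegral.integral_eq_sub_of_hasDerivAt
              (fun τ _ => hq τ y) ((continuous_time hq' y).intervalIntegrable _ _), neg_sub]
      _ = ∫ τ in s..t, ∫ y in (0 : ℝ)..z, -q' τ y := by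
          have hcompact : IntegrableOn (Function.uncurry fun y τ => -q' τ y)
              (Set.uIcc 0 z ×ˢ Set.uIcc s t) (volume.prod volume) :=
            (hq'.comp continuous_swap).neg.continuousOn.integrableOn_compact
              (isCompact_uIcc.prod isCompact_uIcc)
          exact intervalIntegral_intervalIntegral_swap <| hcompact.mono_set <|
            Set.prod_mono Set.uIoc_subset_uIcc Set.uIoc_subset_uIcc
      _ = ∫ τ in s..t, (F τ z - F τ 0) :=
          intervalIntegral.integral_congr fun τ _ =>
            intervalIntegral.integral_eq_sub_of_hasDerivAt (fun y _ => hF τ y)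
              ((continuous_slice hq' τ).neg.intervalIntegrable _ _)
      _ = _ := intervalIntegral.integral_sub ((hFc z).intervalIntegrable _ _)
            ((hFc 0).intervalIntegrable _ _)
  have hprimitive : (fun z => ∫ τ in s..t, F τ z) =
      fun z => (∫ τ in s..t, F τ 0) + ∫ y in (0 : ℝ)..z, (q s y - q t y) :=
    funext fun z => by rw [hswap]; ring
  rw [hprimitive]
  exact (((hqc s).sub (hqc t)).integral_hasStrictDerivAt 0 x).hasDerivAt.const_add _

/-! ### Square-integrable and integrable fields -/

/-- A continuous field on space-time which is square-integrable in space, uniformly in time. -/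
structure L2Bounded (f : ℝ → ℝ → ℝ) : Prop where
  continuous : Continuous (Function.uncurry f)
  memLp : ∀ t, MemLp (f t) 2
  bound : ∃ A, ∀ t, ∫ x, f t x ^ 2 ≤ A

/-- A continuous field on space-time which is integrable in space, uniformly in time. -/
structure L1Bounded (f : ℝ → ℝ → ℝ) : Prop where
  continuous : Continuous (Function.uncurry f)
  integrable : ∀ t, Integrable (f t)
  bound : ∃ A, ∀ t, ∫ x, |f t x| ≤ A

namespace L1Bounded

variable {f g : ℝ → ℝ → ℝ}

lemma of_abs_le (hg : L1Bounded g) (hf : Continuous (Function.uncurry f)) (C : ℝ)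
    (h : ∀ t x, |f t x| ≤ C * |g t x|) : L1Bounded f := by
  have hint : ∀ t, Integrable (f t) := fun t =>
    ((hg.integrable t).abs.const_mul C).mono' (continuous_slice hf t).aestronglyMeasurable
      (.of_forall (h t))
  obtain ⟨A, hA⟩ := hg.bound
  refine ⟨hf, hint, |C| * A, fun t => ?_⟩
  calc ∫ x, |f t x| ≤ ∫ x, |C| * |g t x| :=
        integral_mono (hint t).abs ((hg.integrable t).abs.const_mul _) fun x =>
          (h t x).trans (mul_le_mul_of_nonneg_right (le_abs_self C) (abs_nonneg _))
    _ = |C| * ∫ x, |g t x| := integral_const_mul _ _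
    _ ≤ |C| * A := mul_le_mul_of_nonneg_left (hA t) (abs_nonneg C)

lemma add (hf : L1Bounded f) (hg : L1Bounded g) : L1Bounded fun t x => f t x + g t x := by
  obtain ⟨A, hA⟩ := hf.bound
  obtain ⟨B, hB⟩ := hg.bound
  refine ⟨hf.continuous.add hg.continuous, fun t => (hf.integrable t).add (hg.integrable t),
    A + B, fun t => ?_⟩
  calc ∫ x, |f t x + g t x| ≤ ∫ x, (|f t x| + |g t x|) :=
        integral_mono ((hf.integrable t).add (hg.integrable t)).abs
          ((hf.integrable t).abs.add (hg.integrable t).abs) fun x => abs_add_le _ _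
    _ = (∫ x, |f t x|) + ∫ x, |g t x| := integral_add (hf.integrable t).abs (hg.integrable t).abs
    _ ≤ A + B := add_le_add (hA t) (hB t)

lemma const_mul (hf : L1Bounded f) (c : ℝ) : L1Bounded fun t x => c * f t x :=
  hf.of_abs_le (continuous_const.mul hf.continuous) |c| fun _ _ => (abs_mul _ _).le

lemma neg (hf : L1Bounded f) : L1Bounded fun t x => -f t x := by
  simpa only [neg_one_mul] using hf.const_mul (-1)

lemma sub (hf : L1Bounded f) (hg : L1Bounded g) : L1Bounded fun t x => f t x - g t x := by
  simpa only [sub_eq_add_neg] using hf.add hg.neg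

lemma weight_mul (hf : L1Bounded f) {ω : ℝ → ℝ} (hω : Continuous ω) (hω1 : ∀ x, |ω x| ≤ 1) :
    L1Bounded fun t x => ω x * f t x :=
  hf.of_abs_le ((hω.comp continuous_snd).mul hf.continuous) 1 fun t x => by
    rw [abs_mul]
    exact mul_le_mul_of_nonneg_right (hω1 x) (abs_nonneg _)

lemma integrable_prod (hf : L1Bounded f) (s t : ℝ) :
    Integrable (Function.uncurry f) ((volume.restrict (Set.uIoc s t)).prod volume) := by
  have hfinite : IsFiniteMeasure (volume.restrict (Set.uIoc s t)) :=
    inferInstanceAs (IsFiniteMeasure (volume.restrict (Set.Ioc _ _)))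
  rw [integrable_prod_iff hf.continuous.aestronglyMeasurable]
  obtain ⟨A, hA⟩ := hf.bound
  refine ⟨.of_forall hf.integrable, (integrable_const A).mono' ?_ (.of_forall fun τ => ?_)⟩
  · exact (hf.continuous.norm.aestronglyMeasurable
      (μ := (volume.restrict (Set.uIoc s t)).prod volume)).integral_prod_right'
  · rw [Real.norm_eq_abs, abs_of_nonneg (integral_nonneg fun _ => norm_nonneg _)]
    exact hA τ

lemma integrable_intervalIntegral (hf : L1Bounded f) {s t : ℝ} (hst : s ≤ t) :
    Integrable fun x => ∫ τ in s..t, f τ x := by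
  simpa [intervalIntegral.integral_of_le hst, Set.uIoc_of_le hst] using
    (hf.integrable_prod s t).integral_prod_right

lemma intervalIntegrable_integral (hf : L1Bounded f) (s t : ℝ) :
    IntervalIntegrable (fun τ => ∫ x, f τ x) volume s t :=
  intervalIntegrable_iff.2 (hf.integrable_prod s t).integral_prod_left

lemma integral_intervalIntegral_swap (hf : L1Bounded f) (s t : ℝ) :
    ∫ x, ∫ τ in s..t, f τ x = ∫ τ in s..t, ∫ x, f τ x :=
  (intervalIntegral_integral_swap (hf.integrable_prod s t)).symm

lemma integral_weight_mul_sub {F : ℝ → ℝ → ℝ} (hf : L1Bounded f)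
    (hF : ∀ t x, HasDerivAt (fun s => F s x) (f t x) t) {ω : ℝ → ℝ} (hω : Continuous ω)
    (hω1 : ∀ x, |ω x| ≤ 1) (s t : ℝ) :
    ∫ x, ω x * (F t x - F s x) = ∫ τ in s..t, ∫ x, ω x * f τ x := by
  rw [← (hf.weight_mul hω hω1).integral_intervalIntegral_swap s t]
  congr 1 with x
  rw [intervalIntegral.integral_const_mul, intervalIntegral.integral_eq_sub_of_hasDerivAt
    (fun τ _ => hF τ x) ((continuous_time hf.continuous x).intervalIntegrable _ _)]

lemma exists_abs_integral_weight_mul_le (hf : L1Bounded f) :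
    ∃ A, ∀ ω : ℝ → ℝ, Continuous ω → (∀ x, |ω x| ≤ 1) → ∀ t, |∫ x, ω x * f t x| ≤ A := by
  obtain ⟨A, hA⟩ := hf.bound
  refine ⟨A, fun ω hω hω1 t => ?_⟩
  calc |∫ x, ω x * f t x| ≤ ∫ x, |ω x * f t x| := abs_integral_le_integral_abs
    _ ≤ ∫ x, |f t x| :=
        integral_mono ((hf.weight_mul hω hω1).integrable t).abs (hf.integrable t).abs fun x => by
          simpa only [abs_mul] using mul_le_of_le_one_left (abs_nonneg _) (hω1 x)
    _ ≤ A := hA t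

end L1Bounded

namespace L2Bounded

variable {f g : ℝ → ℝ → ℝ}

lemma const {f : ℝ → ℝ} (hf : Continuous f) (hf2 : MemLp f 2) : L2Bounded fun _ => f :=
  ⟨hf.comp continuous_snd, fun _ => hf2, _, fun _ => le_rfl⟩

lemma of_abs_le (hg : L2Bounded g) (hf : Continuous (Function.uncurry f)) (C : ℝ)
    (h : ∀ t x, |f t x| ≤ C * |g t x|) : L2Bounded f := by
  have hmem : ∀ t, MemLp (f t) 2 := fun t =>
    (hg.memLp t).of_le_mul (continuous_slice hf t).aestronglyMeasurable (.of_forall (h t))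
  obtain ⟨A, hA⟩ := hg.bound
  refine ⟨hf, hmem, C ^ 2 * A, fun t => ?_⟩
  calc ∫ x, f t x ^ 2 ≤ ∫ x, C ^ 2 * g t x ^ 2 :=
        integral_mono (hmem t).integrable_sq ((hg.memLp t).integrable_sq.const_mul _) fun x => by
          calc f t x ^ 2 = |f t x| ^ 2 := (sq_abs _).symm
            _ ≤ (C * |g t x|) ^ 2 := pow_le_pow_left₀ (abs_nonneg _) (h t x) 2
            _ = C ^ 2 * g t x ^ 2 := by rw [mul_pow, sq_abs]
    _ = C ^ 2 * ∫ x, g t x ^ 2 := integral_const_mul _ _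
    _ ≤ C ^ 2 * A := mul_le_mul_of_nonneg_left (hA t) (sq_nonneg C)

lemma const_mul (hf : L2Bounded f) (c : ℝ) : L2Bounded fun t x => c * f t x :=
  hf.of_abs_le (continuous_const.mul hf.continuous) |c| fun _ _ => (abs_mul _ _).le

lemma neg (hf : L2Bounded f) : L2Bounded fun t x => -f t x := by
  simpa only [neg_one_mul] using hf.const_mul (-1)

lemma mul (hf : L2Bounded f) (hg : L2Bounded g) : L1Bounded fun t x => f t x * g t x := by
  have hint : ∀ t, Integrable fun x => f t x * g t x := fun t =>
    (hf.memLp t).integrable_mul (hg.memLp t)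
  obtain ⟨A, hA⟩ := hf.bound
  obtain ⟨B, hB⟩ := hg.bound
  refine ⟨hf.continuous.mul hg.continuous, hint, A + B, fun t => ?_⟩
  calc ∫ x, |f t x * g t x| ≤ ∫ x, (f t x ^ 2 + g t x ^ 2) :=
        integral_mono (hint t).abs
          ((hf.memLp t).integrable_sq.add (hg.memLp t).integrable_sq) fun x => by
          rw [abs_mul, ← sq_abs (f t x), ← sq_abs (g t x)]
          nlinarith [sq_nonneg (|f t x| - |g t x|), sq_nonneg (|f t x| + |g t x|)]
    _ = (∫ x, f t x ^ 2) + ∫ x, g t x ^ 2 :=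
        integral_add (hf.memLp t).integrable_sq (hg.memLp t).integrable_sq
    _ ≤ A + B := add_le_add (hA t) (hB t)

lemma sq (hf : L2Bounded f) : L1Bounded fun t x => f t x ^ 2 := by
  simpa only [pow_two] using hf.mul hf

lemma add (hf : L2Bounded f) (hg : L2Bounded g) : L2Bounded fun t x => f t x + g t x := by
  have hmem : ∀ t, MemLp (fun x => f t x + g t x) 2 := fun t => (hf.memLp t).add (hg.memLp t)
  obtain ⟨A, hA⟩ := hf.bound
  obtain ⟨B, hB⟩ := hg.bound
  refine ⟨hf.continuous.add hg.continuous, hmem, 2 * (A + B), fun t => ?_⟩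
  calc ∫ x, (f t x + g t x) ^ 2 ≤ ∫ x, 2 * (f t x ^ 2 + g t x ^ 2) :=
        integral_mono (hmem t).integrable_sq
          (((hf.memLp t).integrable_sq.add (hg.memLp t).integrable_sq).const_mul 2) fun x =>
          add_sq_le
    _ = 2 * ((∫ x, f t x ^ 2) + ∫ x, g t x ^ 2) := by
        rw [integral_const_mul, integral_add (hf.memLp t).integrable_sq (hg.memLp t).integrable_sq]
    _ ≤ 2 * (A + B) := by linarith [hA t, hB t]

lemma sub (hf : L2Bounded f) (hg : L2Bounded g) : L2Bounded fun t x => f t x - g t x := by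
  simpa only [sub_eq_add_neg] using hf.add hg.neg

lemma mul_of_abs_le (hf : L2Bounded f) (hg : Continuous (Function.uncurry g)) {C : ℝ}
    (hC : ∀ t x, |g t x| ≤ C) : L2Bounded fun t x => g t x * f t x :=
  hf.of_abs_le (hg.mul hf.continuous) C fun t x => by
    rw [abs_mul]
    exact mul_le_mul_of_nonneg_right (hC t x) (abs_nonneg _)

lemma continuous_intervalIntegral (hf : L2Bounded f) (s t : ℝ) :
    Continuous fun x => ∫ τ in s..t, f τ x :=
  intervalIntegral.continuous_parametric_intervalIntegral_of_continuous' (f := fun x τ => f τ x)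
    (hf.continuous.comp continuous_swap) s t

lemma memLp_intervalIntegral (hf : L2Bounded f) {s t : ℝ} (hst : s ≤ t) :
    MemLp (fun x => ∫ τ in s..t, f τ x) 2 := by
  have hcont := hf.continuous_intervalIntegral s t
  refine (memLp_two_iff_integrable_sq hcont.aestronglyMeasurable).2 <|
    ((hf.sq.integrable_intervalIntegral hst).const_mul (t - s)).mono'
      (hcont.pow 2).aestronglyMeasurable (.of_forall fun x => ?_)
  rw [Real.norm_eq_abs, abs_of_nonneg (sq_nonneg _)]
  exact sq_intervalIntegral_le_mul_integral_sq (continuous_time hf.continuous x) hst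

lemma integral_weight_mul_sq_intervalIntegral_le (hf : L2Bounded f) {ω : ℝ → ℝ}
    (hω : Continuous ω) (hω0 : ∀ x, 0 ≤ ω x) (hω1 : ∀ x, ω x ≤ 1) {s t : ℝ} (hst : s ≤ t) :
    ∫ x, ω x * (∫ τ in s..t, f τ x) ^ 2 ≤ (t - s) * ∫ τ in s..t, ∫ x, ω x * f τ x ^ 2 := by
  have habs : ∀ x, |ω x| ≤ 1 := fun x => by
    rw [abs_of_nonneg (hω0 x)]
    exact hω1 x
  have hweighted := hf.sq.weight_mul hω habs
  calc ∫ x, ω x * (∫ τ in s..t, f τ x) ^ 2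
      ≤ ∫ x, (t - s) * ∫ τ in s..t, ω x * f τ x ^ 2 := by
        refine integral_mono ((hf.memLp_intervalIntegral hst).integrable_sq.bdd_mul
          hω.aestronglyMeasurable (.of_forall habs))
          ((hweighted.integrable_intervalIntegral hst).const_mul _) fun x => ?_
        simp only [intervalIntegral.integral_const_mul]
        rw [mul_left_comm]
        exact mul_le_mul_of_nonneg_left (sq_intervalIntegral_le_mul_integral_sq
          (continuous_time hf.continuous x) hst) (hω0 x)
    _ = _ := by rw [integral_const_mul, hweighted.integral_intervalIntegral_swap]

end L2Bounded

/-! ### Slowly varying weights -/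

/-- A `C¹` weight with values in `[0, 1]` whose logarithmic derivative is at most `η`. -/
structure IsSlowWeight (η : ℝ) (ω : ℝ → ℝ) : Prop where
  contDiff : ContDiff ℝ 1 ω
  nonneg : ∀ x, 0 ≤ ω x
  le_one : ∀ x, ω x ≤ 1
  abs_deriv_le : ∀ x, |deriv ω x| ≤ η * ω x

namespace IsSlowWeight

variable {η : ℝ} {ω : ℝ → ℝ}

lemma hasDerivAt (hω : IsSlowWeight η ω) (x : ℝ) : HasDerivAt ω (deriv ω x) x :=
  (hω.contDiff.differentiable one_ne_zero x).hasDerivAt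

lemma continuous (hω : IsSlowWeight η ω) : Continuous ω :=
  hω.contDiff.continuous

lemma continuous_deriv (hω : IsSlowWeight η ω) : Continuous (deriv ω) :=
  hω.contDiff.continuous_deriv le_rfl

lemma abs_le_one (hω : IsSlowWeight η ω) (x : ℝ) : |ω x| ≤ 1 := by
  rw [abs_of_nonneg (hω.nonneg x)]
  exact hω.le_one x

lemma abs_deriv_le_abs (hω : IsSlowWeight η ω) (x : ℝ) : |deriv ω x| ≤ |η| :=
  calc |deriv ω x| ≤ η * ω x := hω.abs_deriv_le x
    _ ≤ |η| * ω x := mul_le_mul_of_nonneg_right (le_abs_self η) (hω.nonneg x)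
    _ ≤ |η| := mul_le_of_le_one_right (abs_nonneg η) (hω.le_one x)

lemma one : IsSlowWeight 0 fun _ => 1 :=
  ⟨contDiff_const, fun _ => zero_le_one, fun _ => le_rfl, fun _ => by simp⟩

lemma mono (hω : IsSlowWeight η ω) {θ : ℝ} (h : η ≤ θ) : IsSlowWeight θ ω :=
  { hω with abs_deriv_le := fun x =>
      (hω.abs_deriv_le x).trans (mul_le_mul_of_nonneg_right h (hω.nonneg x)) }

lemma comp_sub_const (hω : IsSlowWeight η ω) (a : ℝ) : IsSlowWeight η fun x => ω (x - a) where
  contDiff := hω.contDiff.comp (contDiff_id.sub contDiff_const)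
  nonneg x := hω.nonneg _
  le_one x := hω.le_one _
  abs_deriv_le x := by
    rw [deriv_comp_sub_const]
    exact hω.abs_deriv_le _

lemma comp_neg (hω : IsSlowWeight η ω) : IsSlowWeight η fun x => ω (-x) where
  contDiff := hω.contDiff.comp contDiff_neg
  nonneg x := hω.nonneg _
  le_one x := hω.le_one _
  abs_deriv_le x := by
    rw [deriv_comp_neg, abs_neg]
    exact hω.abs_deriv_le _

lemma integrable_mul (hω : IsSlowWeight η ω) {f : ℝ → ℝ} (hf : Integrable f) :
    Integrable fun x => ω x * f x :=
  hf.bdd_mul hω.continuous.aestronglyMeasurable (.of_forall hω.abs_le_one)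

lemma integrable_deriv_mul (hω : IsSlowWeight η ω) {f : ℝ → ℝ} (hf : Integrable f) :
    Integrable fun x => deriv ω x * f x :=
  hf.bdd_mul hω.continuous_deriv.aestronglyMeasurable (.of_forall hω.abs_deriv_le_abs)

lemma integral_mul_deriv (hω : IsSlowWeight η ω) {F f : ℝ → ℝ} (hF : ∀ x, HasDerivAt F (f x) x)
    (hFi : Integrable F) (hf : Integrable f) : ∫ x, ω x * f x = -∫ x, deriv ω x * F x :=
  integral_mul_deriv_eq_deriv_mul_of_integrable (fun x _ => hω.hasDerivAt x)
    (fun x _ => hF x) (hω.integrable_mul hf) (hω.integrable_deriv_mul hFi) (hω.integrable_mul hFi)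

lemma apply_sub_le {χ : ℝ → ℝ} (hχ : IsSlowWeight η χ) (hχ' : IsSlowWeight η (deriv χ))
    (hη : η ≤ 1) (z : ℝ) {r : ℝ} (hr : 0 ≤ r) : χ (z - r) ≤ χ z - r * deriv χ z + r ^ 2 := by
  have hcurvature : ∀ y, deriv (deriv χ) y ≤ 1 := fun y =>
    calc deriv (deriv χ) y ≤ η * deriv χ y := (le_abs_self _).trans (hχ'.abs_deriv_le y)
      _ ≤ 1 * deriv χ y := mul_le_mul_of_nonneg_right hη (hχ'.nonneg y)
      _ ≤ 1 := by simpa using hχ'.le_one y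
  have hslope : ∀ y, z - r < y → y < z → deriv χ z - r ≤ deriv χ y := fun y hry hyz => by
    have := mul_sub_le_sub_of_le_hasDerivAt (fun x => (hχ'.hasDerivAt x).neg) hyz.le
      fun x _ _ => neg_le_neg (hcurvature x)
    simp only [Pi.neg_apply] at this
    linarith
  have := mul_sub_le_sub_of_le_hasDerivAt hχ.hasDerivAt (by linarith) hslope
  linarith

end IsSlowWeight

/-- The smooth transition from `0` at `-∞` to `1` at `+∞` over a length of order `1 / η`. -/
def cutoff (η z : ℝ) : ℝ := sigmoid (η * z)

lemma deriv_cutoff (η : ℝ) : deriv (cutoff η) = fun z => η * (cutoff η z * (1 - cutoff η z)) :=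
  funext fun z => by
    have h := (hasDerivAt_sigmoid (η * z)).comp z ((hasDerivAt_id' z).const_mul η)
    exact h.deriv.trans (by simp only [cutoff]; ring)

lemma contDiff_cutoff (η : ℝ) : ContDiff ℝ 2 (cutoff η) :=
  (contDiff_sigmoid.of_le le_top).comp (contDiff_const.mul contDiff_id)

lemma hasDerivAt_cutoff (η z : ℝ) :
    HasDerivAt (cutoff η) (η * (cutoff η z * (1 - cutoff η z))) z := by
  simpa only [deriv_cutoff] using
    ((contDiff_cutoff η).differentiable two_ne_zero z).hasDerivAt

lemma isSlowWeight_cutoff {η : ℝ} (hη : 0 ≤ η) : IsSlowWeight η (cutoff η) where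
  contDiff := (contDiff_cutoff η).of_le one_le_two
  nonneg z := sigmoid_nonneg _
  le_one z := sigmoid_le_one _
  abs_deriv_le z := by
    have h0 : 0 ≤ cutoff η z := sigmoid_nonneg _
    have h1 : 0 ≤ 1 - cutoff η z := sub_nonneg.2 (sigmoid_le_one _)
    rw [deriv_cutoff, abs_of_nonneg (by positivity)]
    exact mul_le_mul_of_nonneg_left (mul_le_of_le_one_right h0 (sub_le_self _ h0)) hη

lemma isSlowWeight_deriv_cutoff {η : ℝ} (hη : 0 ≤ η) (hη1 : η ≤ 1) :
    IsSlowWeight η (deriv (cutoff η)) := by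
  have h0 : ∀ z, 0 ≤ cutoff η z := fun z => sigmoid_nonneg _
  have h1 : ∀ z, 0 ≤ 1 - cutoff η z := fun z => sub_nonneg.2 (sigmoid_le_one _)
  have hnonneg : ∀ z, 0 ≤ deriv (cutoff η) z := fun z => by
    have := h0 z
    have := h1 z
    rw [deriv_cutoff]
    positivity
  have hderiv2 : ∀ z, deriv (deriv (cutoff η)) z =
      η * (deriv (cutoff η) z * (1 - 2 * cutoff η z)) := fun z => by
    have h := ((hasDerivAt_cutoff η z).mul ((hasDerivAt_cutoff η z).const_sub 1)).const_mul η
    simp only [deriv_cutoff]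
    exact h.deriv.trans (by ring)
  refine ⟨(contDiff_cutoff η).deriv', hnonneg, fun z => ?_, fun z => ?_⟩
  · rw [deriv_cutoff]
    nlinarith [h0 z, h1 z, mul_nonneg (h0 z) (h1 z)]
  · rw [hderiv2, abs_mul, abs_of_nonneg hη, abs_mul, abs_of_nonneg (hnonneg z)]
    refine mul_le_mul_of_nonneg_left (mul_le_of_le_one_right (hnonneg z) ?_) hη
    exact abs_le.2 ⟨by linarith [h1 z], by linarith [h0 z]⟩

/-! ### The exponential nonlinearity -/

lemma exp_mul_sub_le_exp_sub_exp (a b : ℝ) : exp b * (a - b) ≤ exp a - exp b := by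
  have h := mul_le_mul_of_nonneg_left (add_one_le_exp (a - b)) (exp_pos b).le
  rw [← exp_add, add_sub_cancel] at h
  linarith

lemma exp_le_two_of_le_half {a : ℝ} (ha : a ≤ 1 / 2) : exp a ≤ 2 := by
  have h := exp_mul_sub_le_exp_sub_exp 0 a
  rw [exp_zero] at h
  nlinarith [exp_pos a]

lemma abs_exp_sub_exp_le {a b : ℝ} (ha : a ≤ 1 / 2) (hb : b ≤ 1 / 2) :
    |exp a - exp b| ≤ 2 * |a - b| := by
  wlog hab : b ≤ a generalizing a b
  · rw [abs_sub_comm, abs_sub_comm a]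
    exact this hb ha (le_of_not_ge hab)
  rw [abs_of_nonneg (sub_nonneg.2 (exp_le_exp.2 hab)), abs_of_nonneg (sub_nonneg.2 hab)]
  nlinarith [exp_mul_sub_le_exp_sub_exp b a, exp_le_two_of_le_half ha]

lemma half_mul_sq_sub_le_mul_exp_sub_exp {a b : ℝ} (ha : -(1 / 2) ≤ a) (hb : -(1 / 2) ≤ b) :
    1 / 2 * (a - b) ^ 2 ≤ (a - b) * (exp a - exp b) := by
  wlog hab : b ≤ a generalizing a b
  · nlinarith [this hb ha (le_of_not_ge hab)]
  have hexp : 1 / 2 ≤ exp b := by linarith [add_one_le_exp b]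
  nlinarith [exp_mul_sub_le_exp_sub_exp a b, sub_nonneg.2 hab, mul_le_mul_of_nonneg_right hexp
    (sq_nonneg (a - b)), mul_le_mul_of_nonneg_left (exp_mul_sub_le_exp_sub_exp a b)
    (sub_nonneg.2 hab)]

lemma hasDerivAt_qfun (a : ℝ) : HasDerivAt qfun (exp a) a :=
  (hasDerivAt_exp a).sub_const 1

lemma abs_qfun_le {a : ℝ} (ha : a ≤ 1 / 2) : |qfun a| ≤ 2 * |a| := by
  simpa [qfun] using abs_exp_sub_exp_le ha (b := 0) (by norm_num)

lemma Rfun_eq (a : ℝ) : Rfun a = a * exp a - exp a + 1 := by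
  have hprimitive : ∫ s in (0 : ℝ)..a, qfun s = exp a - 1 - a := by
    simp [qfun, intervalIntegral.integral_sub]
  rw [Rfun, hprimitive, qfun]
  ring

lemma continuous_Rfun : Continuous Rfun := by
  simp only [funext Rfun_eq]
  fun_prop

lemma Rfun_nonneg (a : ℝ) : 0 ≤ Rfun a := by
  have h := exp_mul_sub_le_exp_sub_exp 0 a
  rw [exp_zero] at h
  rw [Rfun_eq]
  linarith

lemma Rfun_sub_Rfun_le (a b : ℝ) : Rfun a - Rfun b ≤ a * (exp a - exp b) := by
  rw [Rfun_eq, Rfun_eq]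
  linarith [exp_mul_sub_le_exp_sub_exp a b]

lemma hasDerivAt_Rfun (a : ℝ) : HasDerivAt Rfun (a * exp a) a := by
  rw [funext Rfun_eq]
  exact ((((hasDerivAt_id' a).mul (hasDerivAt_exp a)).sub (hasDerivAt_exp a)).add_const
    1).congr_deriv (by ring)

lemma abs_Rfun_sub_half_sq_le {d a : ℝ} (hd : d ≤ 1 / 2) (ha : |a| ≤ d) :
    |Rfun a - a ^ 2 / 2| ≤ d * a ^ 2 := by
  have hslope : ∀ b, |b| ≤ d → |b * exp b - 1 * b| ≤ 2 * d * |b| := fun b hb => by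
    calc |b * exp b - 1 * b| = |b| * |qfun b| := by rw [← abs_mul, qfun]; ring_nf
      _ ≤ |b| * (2 * d) := mul_le_mul_of_nonneg_left
          ((abs_qfun_le ((le_abs_self b).trans (hb.trans hd))).trans (by linarith)) (abs_nonneg b)
      _ = 2 * d * |b| := mul_comm _ _
  have h := abs_sub_half_mul_sq_le (by simp [Rfun_eq]) (fun b _ => hasDerivAt_Rfun b) hslope ha
  simpa using h

/-! ### Amplitude of the potential -/

lemma add_mul_sq_le_of_le_deriv2 {f f' f'' : ℝ → ℝ} (hf : ∀ x, HasDerivAt f (f' x) x)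
    (hf' : ∀ x, HasDerivAt f' (f'' x) x) {m c a : ℝ} (hc : 0 ≤ c)
    (hm : ∀ x, m ≤ f x → c ≤ f'' x) (ha : m ≤ f a) (ha' : 0 < f' a) {r : ℝ} (hr : 0 ≤ r) :
    m + c * r ^ 2 ≤ f (a + 2 * r) := by
  have hslope : ∀ x, a ≤ x → c * (x - a) ≤ f' x := fun x hx =>
    mul_sub_le_deriv_of_le_deriv2 hf hf' hc hm ha ha' hx
  have hfirst := mul_sub_le_sub_of_le_hasDerivAt hf (a := a) (b := a + r) (c := 0) (by linarith)
    fun x hax _ => (mul_nonneg hc (by linarith)).trans (hslope x hax.le)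
  have hsecond := mul_sub_le_sub_of_le_hasDerivAt hf (a := a + r) (b := a + 2 * r) (c := c * r)
    (by linarith) fun x hax _ =>
      (mul_le_mul_of_nonneg_left (by linarith) hc).trans (hslope x (by linarith))
  nlinarith

lemma exists_linear_lt_mul_sq {a : ℝ} (ha : 0 < a) (b c : ℝ) :
    ∃ r, 0 ≤ r ∧ b * r + c < a * r ^ 2 := by
  have hlim : Filter.Tendsto (fun r : ℝ => r * (a * r - b)) Filter.atTop Filter.atTop :=
    Filter.tendsto_id.atTop_mul_atTop₀ <|
      Filter.tendsto_atTop_add_const_right _ _ (Filter.tendsto_id.const_mul_atTop ha)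
  obtain ⟨r, hr, hcr⟩ :=
    ((Filter.eventually_ge_atTop 0).and (hlim.eventually_gt_atTop c)).exists
  exact ⟨r, hr, by linarith⟩

section ConservationLaw

variable {f f' f'' q q' F : ℝ → ℝ → ℝ} {m c C : ℝ}

-- Convexity makes `f` grow quadratically on the right of such a point, for all nearby times,
-- whereas the conservation law makes the time averages of `F` grow at most linearly.
lemma deriv_nonpos_of_conservationLaw (hf : ∀ t x, HasDerivAt (f t) (f' t x) x)
    (hf' : ∀ t x, HasDerivAt (f' t) (f'' t x) x) (hft : ∀ x, Continuous fun t => f t x)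
    (hf't : ∀ x, Continuous fun t => f' t x) (hqc : ∀ t, Continuous (q t))
    (hq : ∀ t x, HasDerivAt (fun s => q s x) (q' t x) t) (hq' : Continuous (Function.uncurry q'))
    (hF : ∀ t x, HasDerivAt (F t) (-q' t x) x) (hFc : ∀ x, Continuous fun t => F t x)
    (hqC : ∀ t x, |q t x| ≤ C) (hFC : ∀ t x, |F t x - f t x| ≤ C) (hc : 0 < c)
    (hm : ∀ t x, m ≤ f t x → c ≤ f'' t x) {t a : ℝ} (ha : m < f t a) : f' t a ≤ 0 := by
  by_contra! ha'
  have hpersist : ∀ᶠ s in nhds t, m < f s a ∧ 0 < f' s a :=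
    ((hft a).continuousAt.eventually (lt_mem_nhds ha)).and
      ((hf't a).continuousAt.eventually (lt_mem_nhds ha'))
  obtain ⟨τ, hτ, hnear⟩ := Metric.eventually_nhds_iff.1 hpersist
  set b := t + τ / 2 with hb
  have htb : t ≤ b := by linarith
  have hgrowth : ∀ s ∈ Set.Icc t b, ∀ r, 0 ≤ r → m - C + c * r ^ 2 ≤ F s (a + 2 * r) :=
    fun s hs r hr => by
      have hsa := hnear (y := s) (by
        rw [Real.dist_eq, abs_lt]
        constructor <;> linarith [hs.1, hs.2])
      have := add_mul_sq_le_of_le_deriv2 (hf s) (hf' s) hc.le (hm s) hsa.1.le hsa.2 hr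
      linarith [(abs_le.1 (hFC s (a + 2 * r))).1]
  set Ψ : ℝ → ℝ := fun x => ∫ s in t..b, F s x
  have hlower : ∀ r, 0 ≤ r → (b - t) * (m - C + c * r ^ 2) ≤ Ψ (a + 2 * r) := fun r hr => by
    have := intervalIntegral.integral_mono_on htb (intervalIntegrable_const (μ := volume))
      ((hFc (a + 2 * r)).intervalIntegrable _ _) fun s hs => hgrowth s hs r hr
    rwa [intervalIntegral.integral_const, smul_eq_mul] at this
  have hupper : ∀ r, 0 ≤ r → Ψ (a + 2 * r) ≤ Ψ a + 4 * C * r := fun r hr => by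
    have := mul_sub_le_sub_of_le_hasDerivAt
      (fun x => (hasDerivAt_integral_flux hqc hq hq' hF hFc t b x).neg)
      (a := a) (b := a + 2 * r) (c := -(2 * C)) (by linarith) fun x _ _ => by
        linarith [(abs_le.1 (hqC t x)).2, (abs_le.1 (hqC b x)).1]
    simp only [Pi.neg_apply] at this
    linarith
  obtain ⟨r, hr, hlt⟩ := exists_linear_lt_mul_sq (a := (b - t) * c) (mul_pos (by linarith) hc)
    (4 * C) (Ψ a - (b - t) * (m - C))
  linarith [hlower r hr, hupper r hr]

lemma le_of_conservationLaw (hf : ∀ t x, HasDerivAt (f t) (f' t x) x)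
    (hf' : ∀ t x, HasDerivAt (f' t) (f'' t x) x) (hft : ∀ x, Continuous fun t => f t x)
    (hf't : ∀ x, Continuous fun t => f' t x) (hqc : ∀ t, Continuous (q t))
    (hq : ∀ t x, HasDerivAt (fun s => q s x) (q' t x) t) (hq' : Continuous (Function.uncurry q'))
    (hF : ∀ t x, HasDerivAt (F t) (-q' t x) x) (hFc : ∀ x, Continuous fun t => F t x)
    (hqC : ∀ t x, |q t x| ≤ C) (hFC : ∀ t x, |F t x - f t x| ≤ C) (hc : 0 < c)
    (hm : ∀ t x, m ≤ f t x → c ≤ f'' t x) (t x : ℝ) : f t x ≤ m := by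
  by_contra! hx
  have hneg : ∀ z, HasDerivAt (fun z : ℝ => -z) (-1) z := hasDerivAt_neg
  have hreflect : Continuous fun p : ℝ × ℝ => (p.1, -p.2) := by fun_prop
  have hcritical : ∀ z, m < f t z → f' t z = 0 := fun z hz => by
    refine le_antisymm (deriv_nonpos_of_conservationLaw hf hf' hft hf't hqc hq hq' hF hFc hqC hFC
      hc hm hz) (neg_nonpos.1 ?_)
    have := deriv_nonpos_of_conservationLaw (f := fun t x => f t (-x))
      (f' := fun t x => -f' t (-x)) (f'' := fun t x => f'' t (-x)) (q := fun t x => -q t (-x))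
      (q' := fun t x => -q' t (-x)) (F := fun t x => F t (-x)) (m := m) (c := c) (C := C)
      (fun t x => ((hf t (-x)).comp x (hneg x)).congr_deriv (by ring))
      (fun t x => ((hf' t (-x)).comp x (hneg x)).neg.congr_deriv (by ring))
      (fun x => hft (-x)) (fun x => (hf't (-x)).neg) (fun t => ((hqc t).comp continuous_neg).neg)
      (fun t x => (hq t (-x)).neg) (hq'.comp hreflect).neg
      (fun t x => ((hF t (-x)).comp x (hneg x)).congr_deriv (by ring)) (fun x => hFc (-x))
      (fun t x => by simpa using hqC t (-x)) (fun t x => hFC t (-x)) hc (fun t x => hm t (-x))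
      (t := t) (a := -z) (by simpa using hz)
    simpa using this
  have hnear : ∀ᶠ z in nhds x, m < f t z :=
    (hf t x).continuousAt.eventually (lt_mem_nhds hx)
  have hflat : HasDerivAt (f' t) 0 x :=
    (hasDerivAt_const x (0 : ℝ)).congr_of_eventuallyEq (hnear.mono fun z hz => hcritical z hz)
  linarith [hm t x hx.le, (hf' t x).unique hflat]

end ConservationLaw

lemma abs_potential_le {φ φ' n u u' F : ℝ → ℝ → ℝ} {d C : ℝ}
    (hφ : ∀ t x, HasDerivAt (φ t) (φ' t x) x)
    (hφ' : ∀ t x, HasDerivAt (φ' t) (qfun (φ t x) - n t x) x)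
    (hφt : ∀ x, Continuous fun t => φ t x) (hφ't : ∀ x, Continuous fun t => φ' t x)
    (huc : ∀ t, Continuous (u t)) (hu : ∀ t x, HasDerivAt (fun s => u s x) (u' t x) t)
    (hu' : Continuous (Function.uncurry u')) (hF : ∀ t x, HasDerivAt (F t) (-u' t x) x)
    (hFc : ∀ x, Continuous fun t => F t x) (huC : ∀ t x, |u t x| ≤ C)
    (hFC : ∀ t x, |F t x - φ t x| ≤ C) (hd : 0 < d) (hd8 : d ≤ 1 / 8)
    (hn : ∀ t x, |n t x| ≤ d) (t x : ℝ) : |φ t x| ≤ 2 * d := by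
  have hhigh : ∀ t x, 2 * d ≤ φ t x → d / 2 ≤ qfun (φ t x) - n t x := fun t x h => by
    have := add_one_le_exp (φ t x)
    rw [qfun]
    linarith [(abs_le.1 (hn t x)).2]
  have hlow : ∀ t x, 2 * d ≤ -φ t x → d / 2 ≤ -(qfun (φ t x) - n t x) := fun t x h => by
    have hexp : exp (φ t x) ≤ exp (-(2 * d)) := exp_le_exp.2 (by linarith)
    have hquad : exp (-(2 * d)) * (1 + 2 * d) ≤ 1 := by
      have := exp_mul_sub_le_exp_sub_exp 0 (-(2 * d))
      rw [exp_zero] at this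
      linarith
    rw [qfun]
    nlinarith [(abs_le.1 (hn t x)).1]
  refine abs_le'.2 ⟨?_, ?_⟩
  · exact le_of_conservationLaw hφ hφ' hφt hφ't huc hu hu' hF hFc huC hFC (half_pos hd) hhigh t x
  · exact le_of_conservationLaw (f := fun t x => -φ t x) (f' := fun t x => -φ' t x)
      (f'' := fun t x => -(qfun (φ t x) - n t x)) (q := fun t x => -u t x)
      (q' := fun t x => -u' t x) (F := fun t x => -F t x) (fun t x => (hφ t x).neg)
      (fun t x => (hφ' t x).neg) (fun x => (hφt x).neg) (fun x => (hφ't x).neg)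
      (fun t => (huc t).neg) (fun t x => (hu t x).neg) hu'.neg (fun t x => (hF t x).neg)
      (fun x => (hFc x).neg) (fun t x => by simpa using huC t x)
      (fun t x => by rw [← neg_sub', abs_neg]; exact hFC t x) (half_pos hd) hlow t x

/-! ### The Poisson equation in `L²` -/

/-- A solution `φ` of the Poisson equation with density `n`, of amplitude at most `1 / 2`. -/
structure IsSmallPotential (n φ : ℝ → ℝ) : Prop where
  contDiff : ContDiff ℝ 2 φ
  deriv2_eq : ∀ x, deriv (deriv φ) x = qfun (φ x) - n x
  abs_le : ∀ x, |φ x| ≤ 1 / 2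

/-- A small potential with finite electric energy. -/
structure IsFinitePotential (n φ : ℝ → ℝ) : Prop extends IsSmallPotential n φ where
  memLp : MemLp φ 2
  memLp_deriv : MemLp (deriv φ) 2

namespace IsSmallPotential

variable {n φ : ℝ → ℝ}

lemma hasDerivAt (h : IsSmallPotential n φ) (x : ℝ) : HasDerivAt φ (deriv φ x) x :=
  (h.contDiff.differentiable two_ne_zero x).hasDerivAt

lemma hasDerivAt_deriv (h : IsSmallPotential n φ) (x : ℝ) :
    HasDerivAt (deriv φ) (qfun (φ x) - n x) x := by
  rw [← h.deriv2_eq]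
  exact (h.contDiff.differentiable_deriv_two x).hasDerivAt

lemma continuous (h : IsSmallPotential n φ) : Continuous φ :=
  h.contDiff.continuous

lemma continuous_deriv (h : IsSmallPotential n φ) : Continuous (deriv φ) :=
  h.contDiff.continuous_deriv one_le_two

lemma le_half (h : IsSmallPotential n φ) (x : ℝ) : φ x ≤ 1 / 2 :=
  (le_abs_self _).trans (h.abs_le x)

lemma neg_half_le (h : IsSmallPotential n φ) (x : ℝ) : -(1 / 2) ≤ φ x :=
  (_root_.abs_le.1 (h.abs_le x)).1

lemma continuous_qfun_comp (h : IsSmallPotential n φ) : Continuous fun x => qfun (φ x) :=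
  (continuous_of_forall_hasDerivAt hasDerivAt_qfun).comp h.continuous

lemma continuous_density (h : IsSmallPotential n φ) : Continuous n := by
  have hn : n = fun x => qfun (φ x) - deriv (deriv φ) x :=
    funext fun x => by rw [h.deriv2_eq, sub_sub_cancel]
  rw [hn]
  exact h.continuous_qfun_comp.sub (h.contDiff.iterate_deriv' 0 2).continuous

lemma half_mul_sq_le (h : IsSmallPotential n φ) (x : ℝ) : 1 / 2 * φ x ^ 2 ≤ φ x * qfun (φ x) := by
  simpa [qfun] using half_mul_sq_sub_le_mul_exp_sub_exp (h.neg_half_le x) (b := 0) (by norm_num)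

lemma abs_deriv_le (h : IsSmallPotential n φ) {A : ℝ} (hA : ∀ x, |n x| ≤ A) (x : ℝ) :
    |deriv φ x| ≤ 2 + A := by
  have hcurvature : ∀ x, |qfun (φ x) - n x| ≤ 1 + A := fun x => by
    linarith [abs_sub (qfun (φ x)) (n x), abs_qfun_le (h.le_half x), h.abs_le x, hA x]
  linarith [abs_deriv_le_of_abs_le_of_abs_deriv2_le h.hasDerivAt h.hasDerivAt_deriv h.abs_le
    hcurvature x]

lemma hasDerivAt_mul_deriv (h : IsSmallPotential n φ) (x : ℝ) :
    HasDerivAt (fun x => φ x * deriv φ x) (deriv φ x ^ 2 + φ x * (qfun (φ x) - n x)) x :=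
  ((h.hasDerivAt x).mul (h.hasDerivAt_deriv x)).congr_deriv (by ring)

lemma intervalIntegral_sq_add_sq_le (h : IsSmallPotential n φ) (hn : MemLp n 2) {A : ℝ}
    (hA : ∀ x, |n x| ≤ A) {a b : ℝ} (hab : a ≤ b) :
    ∫ x in a..b, (φ x ^ 2 + deriv φ x ^ 2) ≤ 4 * (2 + A) + 4 * ∫ x, n x ^ 2 := by
  have hsq : Continuous fun x => φ x ^ 2 + deriv φ x ^ 2 :=
    (h.continuous.pow 2).add (h.continuous_deriv.pow 2)
  have hn2 : Continuous fun x => 4 * n x ^ 2 := (h.continuous_density.pow 2).const_mul 4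
  have hflux : Continuous fun x => deriv φ x ^ 2 + φ x * (qfun (φ x) - n x) :=
    (h.continuous_deriv.pow 2).add
      (h.continuous.mul (h.continuous_qfun_comp.sub h.continuous_density))
  have hboundary : ∀ x, |φ x * deriv φ x| ≤ (2 + A) / 2 := fun x => by
    rw [abs_mul]
    calc |φ x| * |deriv φ x| ≤ 1 / 2 * (2 + A) :=
          mul_le_mul (h.abs_le x) (h.abs_deriv_le hA x) (abs_nonneg _) (by norm_num)
      _ = (2 + A) / 2 := by ring
  calc ∫ x in a..b, (φ x ^ 2 + deriv φ x ^ 2)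
      ≤ ∫ x in a..b, (4 * (deriv φ x ^ 2 + φ x * (qfun (φ x) - n x)) + 4 * n x ^ 2) :=
        intervalIntegral.integral_mono_on hab (hsq.intervalIntegrable _ _)
          (((hflux.const_mul 4).add hn2).intervalIntegrable _ _) fun x _ => by
          nlinarith [h.half_mul_sq_le x, sq_nonneg (φ x / 2 - n x), sq_nonneg (deriv φ x)]
    _ = 4 * (φ b * deriv φ b - φ a * deriv φ a) + 4 * ∫ x in a..b, n x ^ 2 := by
        rw [intervalIntegral.integral_add ((hflux.const_mul 4).intervalIntegrable _ _)
          (hn2.intervalIntegrable _ _), intervalIntegral.integral_const_mul,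
          intervalIntegral.integral_const_mul, intervalIntegral.integral_eq_sub_of_hasDerivAt
          (fun x _ => h.hasDerivAt_mul_deriv x) (hflux.intervalIntegrable _ _)]
    _ ≤ 4 * (2 + A) + 4 * ∫ x, n x ^ 2 := by
        have : ∫ x in a..b, n x ^ 2 ≤ ∫ x, n x ^ 2 := by
          rw [intervalIntegral.integral_of_le hab]
          exact setIntegral_le_integral hn.integrable_sq (.of_forall fun x => sq_nonneg _)
        linarith [(_root_.abs_le.1 (hboundary a)).1, (_root_.abs_le.1 (hboundary b)).2]

lemma isFinitePotential (h : IsSmallPotential n φ) (hn : MemLp n 2) {A : ℝ}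
    (hA : ∀ x, |n x| ≤ A) : IsFinitePotential n φ := by
  have hsq : Continuous fun x => φ x ^ 2 + deriv φ x ^ 2 :=
    (h.continuous.pow 2).add (h.continuous_deriv.pow 2)
  have hint : Integrable fun x => φ x ^ 2 + deriv φ x ^ 2 := by
    refine integrable_of_intervalIntegral_norm_bounded (4 * (2 + A) + 4 * ∫ x, n x ^ 2)
      (fun r : ℝ => hsq.integrableOn_Ioc) Filter.tendsto_neg_atTop_atBot Filter.tendsto_id ?_
    filter_upwards [Filter.eventually_ge_atTop 0] with r hr
    simp only [Real.norm_eq_abs, abs_of_nonneg (add_nonneg (sq_nonneg (φ _)) (sq_nonneg _))]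
    exact h.intervalIntegral_sq_add_sq_le hn hA (by simp only [id]; linarith)
  refine ⟨h, (memLp_two_iff_integrable_sq h.continuous.aestronglyMeasurable).2 ?_,
    (memLp_two_iff_integrable_sq h.continuous_deriv.aestronglyMeasurable).2 ?_⟩
  · exact hint.mono' (h.continuous.pow 2).aestronglyMeasurable (.of_forall fun x => by
      simpa using sq_nonneg (deriv φ x))
  · exact hint.mono' (h.continuous_deriv.pow 2).aestronglyMeasurable (.of_forall fun x => by
      simpa using sq_nonneg (φ x))

end IsSmallPotential

namespace IsFinitePotential

variable {n φ ω : ℝ → ℝ}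

lemma integrable_mul_deriv (h : IsFinitePotential n φ) : Integrable fun x => φ x * deriv φ x :=
  h.memLp.integrable_mul h.memLp_deriv

lemma memLp_qfun_comp (h : IsFinitePotential n φ) : MemLp (fun x => qfun (φ x)) 2 :=
  h.memLp.of_le_mul h.continuous_qfun_comp.aestronglyMeasurable
    (.of_forall fun x => abs_qfun_le (h.le_half x))

lemma integral_weight_mul_le (h : IsFinitePotential n φ) (hn : MemLp n 2)
    (hω : IsSlowWeight (1 / 2) ω) :
    ∫ x, ω x * (deriv φ x ^ 2 / 2 + φ x ^ 2 / 4) ≤ 2 * ∫ x, ω x * n x ^ 2 := by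
  have hflux : Integrable fun x => deriv φ x ^ 2 + φ x * (qfun (φ x) - n x) :=
    h.memLp_deriv.integrable_sq.add (h.memLp.integrable_mul (h.memLp_qfun_comp.sub hn))
  have hn2 : Integrable fun x => ω x * n x ^ 2 := hω.integrable_mul hn.integrable_sq
  have hquad : ∀ x, deriv φ x ^ 2 + 3 / 8 * φ x ^ 2 ≤
      deriv φ x ^ 2 + φ x * (qfun (φ x) - n x) + 2 * n x ^ 2 := fun x => by
    nlinarith [h.half_mul_sq_le x, sq_nonneg (φ x / 4 - n x)]
  have hcommutator : ∀ x, -(ω x * (φ x ^ 2 / 8 + deriv φ x ^ 2 / 2)) ≤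
      deriv ω x * (φ x * deriv φ x) := fun x => by
    refine neg_le_of_abs_le ?_
    rw [abs_mul]
    calc |deriv ω x| * |φ x * deriv φ x| ≤ 1 / 2 * ω x * (φ x ^ 2 / 4 + deriv φ x ^ 2) := by
          refine mul_le_mul (hω.abs_deriv_le x) (_root_.abs_le.2 ⟨?_, ?_⟩) (abs_nonneg _)
            (mul_nonneg (by norm_num) (hω.nonneg x))
          · nlinarith [sq_nonneg (φ x / 2 + deriv φ x)]
          · nlinarith [sq_nonneg (φ x / 2 - deriv φ x)]
      _ = ω x * (φ x ^ 2 / 8 + deriv φ x ^ 2 / 2) := by ring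
  calc ∫ x, ω x * (deriv φ x ^ 2 / 2 + φ x ^ 2 / 4)
      ≤ ∫ x, (deriv ω x * (φ x * deriv φ x) +
          (ω x * (deriv φ x ^ 2 + φ x * (qfun (φ x) - n x)) + 2 * (ω x * n x ^ 2))) := by
        refine integral_mono
          (hω.integrable_mul ((h.memLp_deriv.integrable_sq.div_const 2).add
            (h.memLp.integrable_sq.div_const 4)))
          ((hω.integrable_deriv_mul h.integrable_mul_deriv).add
            ((hω.integrable_mul hflux).add (hn2.const_mul 2))) fun x => ?_
        have := mul_le_mul_of_nonneg_left (hquad x) (hω.nonneg x)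
        linarith [hcommutator x]
    _ = 2 * ∫ x, ω x * n x ^ 2 := by
        have htail : Integrable fun x =>
            ω x * (deriv φ x ^ 2 + φ x * (qfun (φ x) - n x)) + 2 * (ω x * n x ^ 2) :=
          (hω.integrable_mul hflux).add (hn2.const_mul 2)
        rw [integral_add (hω.integrable_deriv_mul h.integrable_mul_deriv) htail,
          integral_add (hω.integrable_mul hflux) (hn2.const_mul 2),
          hω.integral_mul_deriv h.hasDerivAt_mul_deriv h.integrable_mul_deriv hflux,
          integral_const_mul, add_neg_cancel_left]

end IsFinitePotential

/-! ### Comparison of two potentials -/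

lemma Rfun_le_sq {a : ℝ} (ha : |a| ≤ 1 / 2) : Rfun a ≤ a ^ 2 := by
  linarith [(abs_le.1 (abs_Rfun_sub_half_sq_le le_rfl ha)).2]

/-- The density of electrostatic energy, including that of the Boltzmann electrons. -/
def potentialEnergy (φ : ℝ → ℝ) (x : ℝ) : ℝ := 1 / 2 * deriv φ x ^ 2 + Rfun (φ x)

lemma potentialEnergy_nonneg (φ : ℝ → ℝ) (x : ℝ) : 0 ≤ potentialEnergy φ x :=
  add_nonneg (by positivity) (Rfun_nonneg _)

lemma mul_sq_add_le_of_abs_le {ω ω' η D P Z K S : ℝ} (hη : η ≤ 1) (hω : 0 ≤ ω)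
    (hω' : |ω'| ≤ η * ω) (hZ : Z = P - K) (hDS : 1 / 2 * D ^ 2 ≤ D * S) :
    ω * (P ^ 2 + (1 - η) * Z ^ 2) ≤ ω * K ^ 2 + 2 * (ω * (P * Z + D * S) + ω' * (D * Z)) := by
  have hpolar : P ^ 2 + Z ^ 2 - K ^ 2 = 2 * (P * Z) := by rw [hZ]; ring
  have hcommutator : -(ω' * (D * Z)) ≤ ω * (D ^ 2 / 2 + η * Z ^ 2 / 2) := by
    have hyoung : |D * Z| ≤ D ^ 2 / 2 + Z ^ 2 / 2 :=
      abs_le.2 ⟨by nlinarith [sq_nonneg (D + Z)], by nlinarith [sq_nonneg (D - Z)]⟩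
    have hmul := mul_le_mul hω' hyoung (abs_nonneg _) ((abs_nonneg _).trans hω')
    have hD : η * (ω * D ^ 2) ≤ ω * D ^ 2 :=
      mul_le_of_le_one_left (mul_nonneg hω (sq_nonneg _)) hη
    rw [← abs_mul] at hmul
    linarith [neg_abs_le (ω' * (D * Z))]
  have hmonotone := mul_le_mul_of_nonneg_left hDS hω
  linear_combination 2 * hmonotone + 2 * hcommutator + ω * hpolar

/-- The difference between the change of electric field from `φ₁` to `φ₂` and a displacement `K`
of the ions. -/
def fieldMismatch (φ₁ φ₂ K : ℝ → ℝ) (x : ℝ) : ℝ := deriv φ₂ x - deriv φ₁ x - K x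

namespace IsFinitePotential

lemma integrable_Rfun_comp {n φ : ℝ → ℝ} (h : IsFinitePotential n φ) :
    Integrable fun x => Rfun (φ x) :=
  h.memLp.integrable_sq.mono' (continuous_Rfun.comp h.continuous).aestronglyMeasurable
    (.of_forall fun x => by
      rw [Real.norm_eq_abs, abs_of_nonneg (Rfun_nonneg _)]
      exact Rfun_le_sq (h.abs_le x))

lemma integrable_potentialEnergy {n φ : ℝ → ℝ} (h : IsFinitePotential n φ) :
    Integrable (potentialEnergy φ) :=
  (h.memLp_deriv.integrable_sq.const_mul (1 / 2)).add h.integrable_Rfun_comp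

variable {n₁ n₂ φ₁ φ₂ K ω : ℝ → ℝ} {η : ℝ}

lemma hasDerivAt_fieldMismatch (h₁ : IsFinitePotential n₁ φ₁) (h₂ : IsFinitePotential n₂ φ₂)
    (hK : ∀ x, HasDerivAt K (n₁ x - n₂ x) x) (x : ℝ) :
    HasDerivAt (fieldMismatch φ₁ φ₂ K) (exp (φ₂ x) - exp (φ₁ x)) x :=
  (((h₂.hasDerivAt_deriv x).sub (h₁.hasDerivAt_deriv x)).sub (hK x)).congr_deriv
    (by simp only [qfun]; ring)

lemma memLp_exp_sub_exp (h₁ : IsFinitePotential n₁ φ₁) (h₂ : IsFinitePotential n₂ φ₂) :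
    MemLp (fun x => exp (φ₂ x) - exp (φ₁ x)) 2 := by
  simpa [qfun, Pi.sub_def] using h₂.memLp_qfun_comp.sub h₁.memLp_qfun_comp

lemma integral_weight_mul_fieldMismatch_sq_le (h₁ : IsFinitePotential n₁ φ₁)
    (h₂ : IsFinitePotential n₂ φ₂) (hK : ∀ x, HasDerivAt K (n₁ x - n₂ x) x) (hK2 : MemLp K 2)
    (hω : IsSlowWeight η ω) (hη : η ≤ 1) :
    ∫ x, ω x * ((deriv φ₂ x - deriv φ₁ x) ^ 2 + (1 - η) * fieldMismatch φ₁ φ₂ K x ^ 2) ≤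
      ∫ x, ω x * K x ^ 2 := by
  set D : ℝ → ℝ := fun x => φ₂ x - φ₁ x
  set P : ℝ → ℝ := fun x => deriv φ₂ x - deriv φ₁ x
  set Z : ℝ → ℝ := fieldMismatch φ₁ φ₂ K
  set S : ℝ → ℝ := fun x => exp (φ₂ x) - exp (φ₁ x)
  have hD2 : MemLp D 2 := h₂.memLp.sub h₁.memLp
  have hP2 : MemLp P 2 := h₂.memLp_deriv.sub h₁.memLp_deriv
  have hZ2 : MemLp Z 2 := hP2.sub hK2
  have hflux : Integrable fun x => P x * Z x + D x * S x :=
    (hP2.integrable_mul hZ2).add (hD2.integrable_mul (memLp_exp_sub_exp h₁ h₂))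
  have hDZ : Integrable fun x => D x * Z x := hD2.integrable_mul hZ2
  have hleft : Integrable fun x => ω x * (P x ^ 2 + (1 - η) * Z x ^ 2) :=
    hω.integrable_mul (hP2.integrable_sq.add (hZ2.integrable_sq.const_mul _))
  have hright : Integrable fun x => ω x * K x ^ 2 := hω.integrable_mul hK2.integrable_sq
  have hdivergence : Integrable fun x =>
      ω x * (P x * Z x + D x * S x) + deriv ω x * (D x * Z x) :=
    (hω.integrable_mul hflux).add (hω.integrable_deriv_mul hDZ)
  have hbyparts := hω.integral_mul_deriv (F := fun x => D x * Z x)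
    (f := fun x => P x * Z x + D x * S x)
    (fun x => ((h₂.hasDerivAt x).sub (h₁.hasDerivAt x)).mul (hasDerivAt_fieldMismatch h₁ h₂ hK x))
    hDZ hflux
  have hquadratic : ∀ x, ω x * (P x ^ 2 + (1 - η) * Z x ^ 2) ≤ ω x * K x ^ 2 +
      2 * (ω x * (P x * Z x + D x * S x) + deriv ω x * (D x * Z x)) := fun x =>
    mul_sq_add_le_of_abs_le hη (hω.nonneg x) (hω.abs_deriv_le x) rfl
      (half_mul_sq_sub_le_mul_exp_sub_exp (h₂.neg_half_le x) (h₁.neg_half_le x))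
  calc ∫ x, ω x * (P x ^ 2 + (1 - η) * Z x ^ 2)
      ≤ ∫ x, (ω x * K x ^ 2 + 2 * (ω x * (P x * Z x + D x * S x) + deriv ω x * (D x * Z x))) :=
        integral_mono hleft (hright.add (hdivergence.const_mul 2)) hquadratic
    _ = ∫ x, ω x * K x ^ 2 := by
        rw [integral_add hright (hdivergence.const_mul 2), integral_const_mul, integral_add
          (hω.integrable_mul hflux) (hω.integrable_deriv_mul hDZ), hbyparts, neg_add_cancel,
          mul_zero, add_zero]

lemma integral_weight_mul_potentialEnergy_sub_le (h₁ : IsFinitePotential n₁ φ₁)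
    (h₂ : IsFinitePotential n₂ φ₂) (hK : ∀ x, HasDerivAt K (n₁ x - n₂ x) x) (hK2 : MemLp K 2)
    (hω : IsSlowWeight η ω) :
    ∫ x, ω x * (potentialEnergy φ₂ x - potentialEnergy φ₁ x) ≤
      (∫ x, ω x * (deriv φ₂ x * K x)) - ∫ x, deriv ω x * (φ₂ x * fieldMismatch φ₁ φ₂ K x) := by
  set Z : ℝ → ℝ := fieldMismatch φ₁ φ₂ K with hZ
  set S : ℝ → ℝ := fun x => exp (φ₂ x) - exp (φ₁ x) with hS
  have hZ2 : MemLp Z 2 := (h₂.memLp_deriv.sub h₁.memLp_deriv).sub hK2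
  have hflux : Integrable fun x => deriv φ₂ x * Z x + φ₂ x * S x :=
    (h₂.memLp_deriv.integrable_mul hZ2).add (h₂.memLp.integrable_mul (memLp_exp_sub_exp h₁ h₂))
  have hwork : Integrable fun x => deriv φ₂ x * K x := h₂.memLp_deriv.integrable_mul hK2
  calc ∫ x, ω x * (potentialEnergy φ₂ x - potentialEnergy φ₁ x)
      ≤ ∫ x, (ω x * (deriv φ₂ x * K x) + ω x * (deriv φ₂ x * Z x + φ₂ x * S x)) := by
        refine integral_mono (hω.integrable_mul (h₂.integrable_potentialEnergy.sub
          h₁.integrable_potentialEnergy))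
          ((hω.integrable_mul hwork).add (hω.integrable_mul hflux)) fun x => ?_
        rw [← mul_add]
        refine mul_le_mul_of_nonneg_left ?_ (hω.nonneg x)
        simp only [potentialEnergy, hZ, hS, fieldMismatch]
        nlinarith [Rfun_sub_Rfun_le (φ₂ x) (φ₁ x), sq_nonneg (deriv φ₂ x - deriv φ₁ x)]
    _ = _ := by
        rw [integral_add (hω.integrable_mul hwork) (hω.integrable_mul hflux),
          hω.integral_mul_deriv (F := fun x => φ₂ x * Z x)
            (fun x => (h₂.hasDerivAt x).mul (hasDerivAt_fieldMismatch h₁ h₂ hK x))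
            (h₂.memLp.integrable_mul hZ2) hflux, sub_eq_add_neg]

end IsFinitePotential

/-! ### Enthalpies -/

/-- An enthalpy, as a function of the perturbation of the unit density, that is locally
increasing at equilibrium; `deriv w 0` is the square of the sound speed. -/
structure IsEnthalpy (w : ℝ → ℝ) : Prop where
  contDiffOn : ContDiffOn ℝ 1 w (Set.Ioi (-1))
  apply_zero : w 0 = 0
  deriv_pos : 0 < deriv w 0

lemma Wfun_zero (w : ℝ → ℝ) : Wfun w 0 = 0 :=
  intervalIntegral.integral_same

namespace IsEnthalpy

variable {w : ℝ → ℝ}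

lemma hasDerivAt (hw : IsEnthalpy w) {a : ℝ} (ha : -1 < a) : HasDerivAt w (deriv w a) a :=
  ((hw.contDiffOn.differentiableOn one_ne_zero).differentiableAt (Ioi_mem_nhds ha)).hasDerivAt

lemma continuousOn_deriv (hw : IsEnthalpy w) : ContinuousOn (deriv w) (Set.Ioi (-1)) :=
  hw.contDiffOn.continuousOn_deriv_of_isOpen isOpen_Ioi le_rfl

lemma hasDerivAt_Wfun (hw : IsEnthalpy w) {a : ℝ} (ha : -1 < a) :
    HasDerivAt (Wfun w) (w a) a := by
  have hcont := hw.contDiffOn.continuousOn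
  refine intervalIntegral.integral_hasDerivAt_right ?_
    (hcont.stronglyMeasurableAtFilter isOpen_Ioi a ha) (hw.hasDerivAt ha).continuousAt
  exact (hcont.mono fun x hx => (lt_min (by norm_num) ha).trans_le hx.1).intervalIntegrable

lemma continuousOn_Wfun (hw : IsEnthalpy w) : ContinuousOn (Wfun w) (Set.Ioi (-1)) :=
  fun _ ha => (hw.hasDerivAt_Wfun ha).continuousAt.continuousWithinAt

lemma exists_bounds (hw : IsEnthalpy w) : ∃ C, ∀ a, |a| ≤ 1 / 2 →
    |deriv w a| ≤ C ∧ |w a| ≤ C * |a| ∧ |Wfun w a| ≤ C * a ^ 2 := by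
  have hgt : ∀ a : ℝ, |a| ≤ 1 / 2 → -1 < a := fun a ha => by linarith [(abs_le.1 ha).1]
  obtain ⟨C, hC⟩ := (isCompact_Icc (a := -(1 / 2 : ℝ)) (b := 1 / 2)).exists_bound_of_continuousOn
    (hw.continuousOn_deriv.mono fun a ha => hgt a (abs_le.2 ha))
  have hderiv : ∀ a, |a| ≤ 1 / 2 → |deriv w a| ≤ C := fun a ha => hC a (abs_le.1 ha)
  have hC0 : 0 ≤ C := (abs_nonneg _).trans (hderiv 0 (by norm_num))
  have happly : ∀ a, |a| ≤ 1 / 2 → |w a| ≤ C * |a| := fun a ha => by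
    have h := (convex_Icc (-(1 / 2 : ℝ)) (1 / 2)).norm_image_sub_le_of_norm_hasDerivWithin_le
      (fun b hb => (hw.hasDerivAt (hgt b (abs_le.2 hb))).hasDerivWithinAt) hC
      (by norm_num : (0 : ℝ) ∈ Set.Icc (-(1 / 2)) (1 / 2)) (abs_le.1 ha)
    simpa [hw.apply_zero] using h
  refine ⟨C, fun a ha => ⟨hderiv a ha, happly a ha, ?_⟩⟩
  have h := abs_sub_half_mul_sq_le (β := 0) (Wfun_zero w)
    (fun b hb => hw.hasDerivAt_Wfun (hgt b hb)) (fun b hb => by simpa using happly b hb) ha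
  have := mul_nonneg hC0 (sq_nonneg a)
  simp only [zero_mul, zero_div, sub_zero] at h
  linarith

lemma exists_abs_sub_le (hw : IsEnthalpy w) {θ : ℝ} (hθ : 0 < θ) :
    ∃ d, 0 < d ∧ ∀ a, |a| ≤ d → |w a - deriv w 0 * a| ≤ θ * |a| := by
  have hlin := (hw.hasDerivAt neg_one_lt_zero).isLittleO.bound hθ
  obtain ⟨d, hd, hball⟩ := Metric.eventually_nhds_iff.1 hlin
  refine ⟨d / 2, half_pos hd, fun a ha => ?_⟩
  have h := hball (y := a) (by rw [Real.dist_eq, sub_zero]; linarith)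
  simpa [hw.apply_zero, mul_comm] using h

end IsEnthalpy

/-! ### Solutions of small amplitude -/

/-- The momentum density `(1 + n) u`. -/
def massFlux (n u : ℝ → ℝ → ℝ) (t x : ℝ) : ℝ := (1 + n t x) * u t x

/-- The Bernoulli head `u² / 2 + w(n)`: the hydrodynamic potential of the ions. -/
def bernoulliHead (w : ℝ → ℝ) (n u : ℝ → ℝ → ℝ) (t x : ℝ) : ℝ := u t x ^ 2 / 2 + w (n t x)

/-- The kinetic and internal part of the energy density. -/
def hydroEnergy (w : ℝ → ℝ) (n u : ℝ → ℝ → ℝ) (t x : ℝ) : ℝ :=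
  1 / 2 * (1 + n t x) * u t x ^ 2 + Wfun w (n t x)

/-- The time derivative of `hydroEnergy`. -/
def hydroPower (w : ℝ → ℝ) (n u : ℝ → ℝ → ℝ) (t x : ℝ) : ℝ :=
  bernoulliHead w n u t x * timeDeriv n t x + massFlux n u t x * timeDeriv u t x

lemma energyDensity_eq (w : ℝ → ℝ) (n u φ : ℝ → ℝ → ℝ) (t x : ℝ) :
    energyDensity w (n t) (u t) (φ t) x = hydroEnergy w n u t x + potentialEnergy (φ t) x := by
  simp only [energyDensity, hydroEnergy, potentialEnergy]
  ring

namespace IsEPwSolution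

variable {w : ℝ → ℝ} {n u φ : ℝ → ℝ → ℝ}

lemma neg_one_lt (h : IsEPwSolution w n u φ) (t x : ℝ) : -1 < n t x := by
  linarith [h.dens_pos t x]

lemma hasDerivAt_phi (h : IsEPwSolution w n u φ) (t x : ℝ) :
    HasDerivAt (φ t) (spaceDeriv φ t x) x :=
  ((h.reg_phi_space t).differentiable two_ne_zero x).hasDerivAt

lemma hasDerivAt_spaceDeriv_phi (h : IsEPwSolution w n u φ) (t x : ℝ) :
    HasDerivAt (spaceDeriv φ t) (qfun (φ t x) - n t x) x :=
  ((h.reg_phi_space t).differentiable_deriv_two x).hasDerivAt.congr_deriv <| by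
    linarith [h.eq_phi t x]

lemma continuous_comp_density (h : IsEPwSolution w n u φ) {f : ℝ → ℝ}
    (hf : ContinuousOn f (Set.Ioi (-1))) : Continuous (Function.uncurry fun t x => f (n t x)) :=
  hf.comp_continuous h.reg_n.continuous fun q => h.neg_one_lt q.1 q.2

lemma hasDerivAt_massFlux (h : IsEPwSolution w n u φ) (t x : ℝ) :
    HasDerivAt (massFlux n u t) (-timeDeriv n t x) x := by
  have hdiff : HasDerivAt (massFlux n u t) _ x :=
    ((hasDerivAt_spaceDeriv h.reg_n t x).const_add 1).mul (hasDerivAt_spaceDeriv h.reg_u t x)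
  rw [timeDeriv, h.eq_n, neg_neg]
  exact hdiff.differentiableAt.hasDerivAt

lemma timeDeriv_density (h : IsEPwSolution w n u φ) (t x : ℝ) : timeDeriv n t x =
    -(spaceDeriv n t x * u t x + (1 + n t x) * spaceDeriv u t x) := by
  rw [timeDeriv, h.eq_n]
  exact congrArg _ (((hasDerivAt_spaceDeriv h.reg_n t x).const_add 1).mul
    (hasDerivAt_spaceDeriv h.reg_u t x)).deriv

lemma hasDerivAt_bernoulliHead (h : IsEPwSolution w n u φ) (hw : IsEnthalpy w) (t x : ℝ) :
    HasDerivAt (bernoulliHead w n u t)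
      (u t x * spaceDeriv u t x + deriv w (n t x) * spaceDeriv n t x) x := by
  refine ((((hasDerivAt_spaceDeriv h.reg_u t x).pow 2).div_const 2).add
    ((hw.hasDerivAt (h.neg_one_lt t x)).comp x (hasDerivAt_spaceDeriv h.reg_n t x))).congr_deriv ?_
  push_cast
  ring

lemma timeDeriv_velocity (h : IsEPwSolution w n u φ) (hw : IsEnthalpy w) (t x : ℝ) :
    timeDeriv u t x = -(u t x * spaceDeriv u t x + deriv w (n t x) * spaceDeriv n t x +
      spaceDeriv φ t x) := by
  rw [timeDeriv, h.eq_u]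
  exact congrArg _ ((h.hasDerivAt_bernoulliHead hw t x).add (h.hasDerivAt_phi t x)).deriv

lemma hasDerivAt_hydroEnergy (h : IsEPwSolution w n u φ) (hw : IsEnthalpy w) (t x : ℝ) :
    HasDerivAt (fun s => hydroEnergy w n u s x) (hydroPower w n u t x) t := by
  refine (((((hasDerivAt_timeDeriv h.reg_n t x).const_add 1).const_mul (1 / 2)).mul
    ((hasDerivAt_timeDeriv h.reg_u t x).pow 2)).add
    ((hw.hasDerivAt_Wfun (h.neg_one_lt t x)).comp t (hasDerivAt_timeDeriv h.reg_n t x))).congr_deriv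
    ?_
  simp only [hydroPower, bernoulliHead, massFlux, Pi.pow_apply]
  push_cast
  ring

lemma hasDerivAt_massFlux_mul_bernoulliHead (h : IsEPwSolution w n u φ) (hw : IsEnthalpy w)
    (t x : ℝ) : HasDerivAt (fun x => massFlux n u t x * bernoulliHead w n u t x)
      (-(hydroPower w n u t x + massFlux n u t x * spaceDeriv φ t x)) x := by
  refine ((h.hasDerivAt_massFlux t x).mul (h.hasDerivAt_bernoulliHead hw t x)).congr_deriv ?_
  rw [hydroPower, h.timeDeriv_velocity hw]
  ring

lemma continuous_one_add_density (h : IsEPwSolution w n u φ) :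
    Continuous (Function.uncurry fun t x => 1 + n t x) :=
  continuous_const.add h.reg_n.continuous

lemma continuous_massFlux (h : IsEPwSolution w n u φ) :
    Continuous (Function.uncurry (massFlux n u)) :=
  h.continuous_one_add_density.mul h.reg_u.continuous

lemma continuous_bernoulliHead (h : IsEPwSolution w n u φ) (hw : IsEnthalpy w) :
    Continuous (Function.uncurry (bernoulliHead w n u)) :=
  ((h.reg_u.continuous.pow 2).div_const 2).add
    (h.continuous_comp_density hw.contDiffOn.continuousOn)

end IsEPwSolution

/-- A solution with amplitude at most `1 / 2` whose fields and first derivatives are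
square-integrable in space, uniformly in time. -/
structure IsSmallSolution (w : ℝ → ℝ) (n u φ : ℝ → ℝ → ℝ) : Prop
    extends IsEPwSolution w n u φ where
  enthalpy : IsEnthalpy w
  abs_density_le : ∀ t x, |n t x| ≤ 1 / 2
  abs_velocity_le : ∀ t x, |u t x| ≤ 1 / 2
  potential : ∀ t, IsFinitePotential (n t) (φ t)
  l2Bounded_density : L2Bounded n
  l2Bounded_velocity : L2Bounded u
  l2Bounded_spaceDeriv_density : L2Bounded (spaceDeriv n)
  l2Bounded_spaceDeriv_velocity : L2Bounded (spaceDeriv u)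
  l2Bounded_phi : L2Bounded φ
  l2Bounded_spaceDeriv_phi : L2Bounded (spaceDeriv φ)

namespace IsSmallSolution

variable {w : ℝ → ℝ} {n u φ : ℝ → ℝ → ℝ}

lemma abs_one_add_density_le (h : IsSmallSolution w n u φ) (t x : ℝ) : |1 + n t x| ≤ 3 / 2 := by
  linarith [abs_add_le 1 (n t x), h.abs_density_le t x, abs_one (α := ℝ)]

lemma l2Bounded_massFlux (h : IsSmallSolution w n u φ) : L2Bounded (massFlux n u) :=
  h.l2Bounded_velocity.mul_of_abs_le (g := fun t x => 1 + n t x)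
    h.continuous_one_add_density h.abs_one_add_density_le

lemma l2Bounded_sq_velocity (h : IsSmallSolution w n u φ) : L2Bounded fun t x => u t x ^ 2 := by
  simpa only [pow_two] using h.l2Bounded_velocity.mul_of_abs_le h.reg_u.continuous h.abs_velocity_le

lemma l2Bounded_bernoulliHead (h : IsSmallSolution w n u φ) : L2Bounded (bernoulliHead w n u) := by
  obtain ⟨C, hC⟩ := h.enthalpy.exists_bounds
  have hkinetic : L2Bounded fun t x => u t x ^ 2 / 2 := by
    simpa only [div_eq_inv_mul] using h.l2Bounded_sq_velocity.const_mul 2⁻¹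
  exact hkinetic.add (h.l2Bounded_density.of_abs_le
    (h.continuous_comp_density h.enthalpy.contDiffOn.continuousOn) C
    fun t x => (hC _ (h.abs_density_le t x)).2.1)

lemma l2Bounded_timeDeriv_density (h : IsSmallSolution w n u φ) : L2Bounded (timeDeriv n) := by
  have hflux : L2Bounded fun t x =>
      -(u t x * spaceDeriv n t x + (1 + n t x) * spaceDeriv u t x) :=
    ((h.l2Bounded_spaceDeriv_density.mul_of_abs_le h.reg_u.continuous h.abs_velocity_le).add
      (h.l2Bounded_spaceDeriv_velocity.mul_of_abs_le (g := fun t x => 1 + n t x)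
        h.continuous_one_add_density h.abs_one_add_density_le)).neg
  convert hflux using 3 with t x
  rw [h.timeDeriv_density, mul_comm (spaceDeriv n t x)]

lemma l2Bounded_timeDeriv_velocity (h : IsSmallSolution w n u φ) : L2Bounded (timeDeriv u) := by
  obtain ⟨C, hC⟩ := h.enthalpy.exists_bounds
  have hflux : L2Bounded fun t x => -(u t x * spaceDeriv u t x +
      deriv w (n t x) * spaceDeriv n t x + spaceDeriv φ t x) :=
    (((h.l2Bounded_spaceDeriv_velocity.mul_of_abs_le h.reg_u.continuous h.abs_velocity_le).add
      (h.l2Bounded_spaceDeriv_density.mul_of_abs_le (g := fun t x => deriv w (n t x))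
        (h.continuous_comp_density h.enthalpy.continuousOn_deriv) (C := C)
        fun t x => (hC _ (h.abs_density_le t x)).1)).add h.l2Bounded_spaceDeriv_phi).neg
  convert hflux using 3 with t x
  exact h.timeDeriv_velocity h.enthalpy t x

lemma l1Bounded_hydroPower (h : IsSmallSolution w n u φ) : L1Bounded (hydroPower w n u) :=
  (h.l2Bounded_bernoulliHead.mul h.l2Bounded_timeDeriv_density).add
    (h.l2Bounded_massFlux.mul h.l2Bounded_timeDeriv_velocity)

lemma l1Bounded_hydroEnergy (h : IsSmallSolution w n u φ) : L1Bounded (hydroEnergy w n u) := by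
  obtain ⟨C, hC⟩ := h.enthalpy.exists_bounds
  have hkinetic : L1Bounded fun t x => 1 / 2 * (1 + n t x) * u t x ^ 2 := by
    simpa only [massFlux, mul_assoc, ← pow_two] using
      (h.l2Bounded_massFlux.mul h.l2Bounded_velocity).const_mul (1 / 2)
  exact hkinetic.add (h.l2Bounded_density.sq.of_abs_le
    (h.continuous_comp_density h.enthalpy.continuousOn_Wfun) C fun t x => by
      simpa using (hC _ (h.abs_density_le t x)).2.2)

lemma l1Bounded_potentialEnergy (h : IsSmallSolution w n u φ) :
    L1Bounded fun t x => potentialEnergy (φ t) x := by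
  refine (h.l2Bounded_spaceDeriv_phi.sq.const_mul (1 / 2)).add (h.l2Bounded_phi.sq.of_abs_le
    (continuous_Rfun.comp h.l2Bounded_phi.continuous) 1 fun t x => ?_)
  rw [abs_of_nonneg (Rfun_nonneg _), one_mul, abs_of_nonneg (sq_nonneg _)]
  exact Rfun_le_sq ((h.potential t).abs_le x)

lemma l1Bounded_energyDensity (h : IsSmallSolution w n u φ) :
    L1Bounded fun t => energyDensity w (n t) (u t) (φ t) := by
  simpa only [← energyDensity_eq] using h.l1Bounded_hydroEnergy.add h.l1Bounded_potentialEnergy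

lemma integral_weight_mul_hydroEnergy_sub (h : IsSmallSolution w n u φ) {η : ℝ} {ω : ℝ → ℝ}
    (hω : IsSlowWeight η ω) (s t : ℝ) :
    ∫ x, ω x * (hydroEnergy w n u t x - hydroEnergy w n u s x) =
      ∫ τ in s..t, ((∫ x, deriv ω x * (massFlux n u τ x * bernoulliHead w n u τ x)) -
        ∫ x, ω x * (massFlux n u τ x * spaceDeriv φ τ x)) := by
  rw [h.l1Bounded_hydroPower.integral_weight_mul_sub (h.hasDerivAt_hydroEnergy h.enthalpy)
    hω.continuous hω.abs_le_one]
  refine intervalIntegral.integral_congr fun τ _ => ?_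
  have hpower := h.l1Bounded_hydroPower.integrable τ
  have hwork := (h.l2Bounded_massFlux.mul h.l2Bounded_spaceDeriv_phi).integrable τ
  have hbyparts := hω.integral_mul_deriv (h.hasDerivAt_massFlux_mul_bernoulliHead h.enthalpy τ)
    ((h.l2Bounded_massFlux.mul h.l2Bounded_bernoulliHead).integrable τ) (hpower.add hwork).neg
  simp only [mul_neg, mul_add, integral_neg] at hbyparts
  rw [integral_add (hω.integrable_mul hpower) (hω.integrable_mul hwork)] at hbyparts
  linarith

end IsSmallSolution

/-! ### Transport of the localized energy -/

/-- The mass that crosses `x` between the times `s` and `t`. -/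
def displacement (n u : ℝ → ℝ → ℝ) (s t x : ℝ) : ℝ := ∫ τ in s..t, massFlux n u τ x

namespace IsSmallSolution

variable {w : ℝ → ℝ} {n u φ : ℝ → ℝ → ℝ} {η s₀ A : ℝ} {ω χ : ℝ → ℝ} {s t : ℝ}

lemma hasDerivAt_displacement (h : IsSmallSolution w n u φ) (s t x : ℝ) :
    HasDerivAt (displacement n u s t) (n s x - n t x) x :=
  hasDerivAt_integral_flux (continuous_slice h.reg_n.continuous) (hasDerivAt_timeDeriv h.reg_n)
    (continuous_timeDeriv h.reg_n) h.hasDerivAt_massFlux (continuous_time h.continuous_massFlux)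
    s t x

lemma memLp_displacement (h : IsSmallSolution w n u φ) (hst : s ≤ t) :
    MemLp (displacement n u s t) 2 :=
  h.l2Bounded_massFlux.memLp_intervalIntegral hst

lemma integral_weight_mul_sq_add_fieldMismatch_sq_le (h : IsSmallSolution w n u φ)
    (hω : IsSlowWeight η ω) (hη : η ≤ 1) (hst : s ≤ t) :
    ∫ x, ω x * ((spaceDeriv φ t x - spaceDeriv φ s x) ^ 2 +
        (1 - η) * fieldMismatch (φ s) (φ t) (displacement n u s t) x ^ 2) ≤
      (t - s) * ∫ τ in s..t, ∫ x, ω x * massFlux n u τ x ^ 2 :=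
  ((h.potential s).integral_weight_mul_fieldMismatch_sq_le (h.potential t)
    (h.hasDerivAt_displacement s t) (h.memLp_displacement hst) hω hη).trans
    (h.l2Bounded_massFlux.integral_weight_mul_sq_intervalIntegral_le hω.continuous hω.nonneg
      hω.le_one hst)

lemma memLp_spaceDeriv_phi_sub (h : IsSmallSolution w n u φ) (s t : ℝ) :
    MemLp (fun x => spaceDeriv φ t x - spaceDeriv φ s x) 2 :=
  (h.l2Bounded_spaceDeriv_phi.memLp t).sub (h.l2Bounded_spaceDeriv_phi.memLp s)

lemma memLp_fieldMismatch (h : IsSmallSolution w n u φ) (hst : s ≤ t) :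
    MemLp (fieldMismatch (φ s) (φ t) (displacement n u s t)) 2 :=
  (h.memLp_spaceDeriv_phi_sub s t).sub (h.memLp_displacement hst)

lemma integral_weight_mul_spaceDeriv_phi_sub_sq_le (h : IsSmallSolution w n u φ)
    (hω : IsSlowWeight η ω) (hη : η ≤ 1) (hA : ∀ τ, ∫ x, ω x * massFlux n u τ x ^ 2 ≤ A)
    (hst : s ≤ t) :
    ∫ x, ω x * (spaceDeriv φ t x - spaceDeriv φ s x) ^ 2 ≤ A * (t - s) ^ 2 := by
  have hP := (h.memLp_spaceDeriv_phi_sub s t).integrable_sq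
  have hZ := (h.memLp_fieldMismatch hst).integrable_sq
  calc ∫ x, ω x * (spaceDeriv φ t x - spaceDeriv φ s x) ^ 2
      ≤ ∫ x, ω x * ((spaceDeriv φ t x - spaceDeriv φ s x) ^ 2 +
          (1 - η) * fieldMismatch (φ s) (φ t) (displacement n u s t) x ^ 2) :=
        integral_mono (hω.integrable_mul hP)
          (hω.integrable_mul (hP.add (hZ.const_mul _))) fun x =>
          mul_le_mul_of_nonneg_left (le_add_of_nonneg_right
            (mul_nonneg (sub_nonneg.2 hη) (sq_nonneg _))) (hω.nonneg x)
    _ ≤ (t - s) * ∫ τ in s..t, ∫ x, ω x * massFlux n u τ x ^ 2 :=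
        h.integral_weight_mul_sq_add_fieldMismatch_sq_le hω hη hst
    _ ≤ (t - s) * ∫ _ in s..t, A :=
        mul_le_mul_of_nonneg_left (intervalIntegral.integral_mono_on hst
          ((h.l2Bounded_massFlux.sq.weight_mul hω.continuous
            hω.abs_le_one).intervalIntegrable_integral s t) intervalIntegrable_const
          fun τ _ => hA τ) (sub_nonneg.2 hst)
    _ = A * (t - s) ^ 2 := by
        rw [intervalIntegral.integral_const, smul_eq_mul]
        ring

lemma integral_weight_mul_massFlux_mul_sub_le (h : IsSmallSolution w n u φ)
    (hω : IsSlowWeight η ω) (hη : η ≤ 1) (hA : ∀ τ, ∫ x, ω x * massFlux n u τ x ^ 2 ≤ A)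
    (hst : s ≤ t) :
    ∫ x, ω x * (massFlux n u s x * (spaceDeriv φ t x - spaceDeriv φ s x)) ≤ A * (t - s) := by
  rcases hst.eq_or_lt with rfl | hlt
  · simp
  have hr : 0 < t - s := sub_pos.2 hlt
  have hJ := h.l2Bounded_massFlux.memLp s
  have hP := h.memLp_spaceDeriv_phi_sub s t
  have hJ2 : Integrable fun x => (t - s) / 2 * (ω x * massFlux n u s x ^ 2) :=
    (hω.integrable_mul hJ.integrable_sq).const_mul _
  have hP2 : Integrable fun x =>
      (2 * (t - s))⁻¹ * (ω x * (spaceDeriv φ t x - spaceDeriv φ s x) ^ 2) :=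
    (hω.integrable_mul hP.integrable_sq).const_mul _
  calc ∫ x, ω x * (massFlux n u s x * (spaceDeriv φ t x - spaceDeriv φ s x))
      ≤ ∫ x, ((t - s) / 2 * (ω x * massFlux n u s x ^ 2) +
          (2 * (t - s))⁻¹ * (ω x * (spaceDeriv φ t x - spaceDeriv φ s x) ^ 2)) := by
        refine integral_mono (hω.integrable_mul (hJ.integrable_mul hP)) (hJ2.add hP2) fun x => ?_
        have hyoung : massFlux n u s x * (spaceDeriv φ t x - spaceDeriv φ s x) ≤
            (t - s) / 2 * massFlux n u s x ^ 2 +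
              (2 * (t - s))⁻¹ * (spaceDeriv φ t x - spaceDeriv φ s x) ^ 2 := by
          field_simp
          nlinarith [sq_nonneg ((t - s) * massFlux n u s x -
            (spaceDeriv φ t x - spaceDeriv φ s x))]
        linarith [mul_le_mul_of_nonneg_left hyoung (hω.nonneg x)]
    _ ≤ (t - s) / 2 * A + (2 * (t - s))⁻¹ * (A * (t - s) ^ 2) := by
        rw [integral_add hJ2 hP2, integral_const_mul, integral_const_mul]
        exact add_le_add (mul_le_mul_of_nonneg_left (hA s) (by positivity))
          (mul_le_mul_of_nonneg_left
            (h.integral_weight_mul_spaceDeriv_phi_sub_sq_le hω hη hA hst) (by positivity))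
    _ = A * (t - s) := by field_simp; ring

lemma neg_integral_weight_mul_phi_mul_fieldMismatch_le (h : IsSmallSolution w n u φ)
    (hω : IsSlowWeight η ω) (hη : η < 1) (hs₀ : 0 < s₀) (hst : s < t) :
    -∫ x, ω x * (φ t x * fieldMismatch (φ s) (φ t) (displacement n u s t) x) ≤
      (t - s) * (s₀ / 2 * ∫ x, ω x * φ t x ^ 2) +
        (2 * s₀ * (1 - η))⁻¹ * ∫ τ in s..t, ∫ x, ω x * massFlux n u τ x ^ 2 := by
  set Z := fieldMismatch (φ s) (φ t) (displacement n u s t)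
  have hr : 0 < t - s := sub_pos.2 hst
  have hη' : 0 < 1 - η := sub_pos.2 hη
  have hφ := h.l2Bounded_phi.memLp t
  have hP := (h.memLp_spaceDeriv_phi_sub s t).integrable_sq
  have hZ2 : MemLp Z 2 := h.memLp_fieldMismatch hst.le
  have hZsq : Integrable fun x => ω x * ((1 - η) * Z x ^ 2) :=
    hω.integrable_mul (hZ2.integrable_sq.const_mul _)
  have hφsq : Integrable fun x => ω x * φ t x ^ 2 := hω.integrable_mul hφ.integrable_sq
  have hmismatch : ∫ x, ω x * ((1 - η) * Z x ^ 2) ≤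
      (t - s) * ∫ τ in s..t, ∫ x, ω x * massFlux n u τ x ^ 2 :=
    (integral_mono hZsq (hω.integrable_mul (hP.add (hZ2.integrable_sq.const_mul _))) fun x =>
      mul_le_mul_of_nonneg_left (le_add_of_nonneg_left (sq_nonneg _)) (hω.nonneg x)).trans
      (h.integral_weight_mul_sq_add_fieldMismatch_sq_le hω hη.le hst.le)
  calc -∫ x, ω x * (φ t x * Z x)
      ≤ ∫ x, ((t - s) * (s₀ / 2) * (ω x * φ t x ^ 2) +
          (2 * s₀ * (1 - η) * (t - s))⁻¹ * (ω x * ((1 - η) * Z x ^ 2))) := by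
        rw [← integral_neg]
        refine integral_mono (hω.integrable_mul (hφ.integrable_mul hZ2)).neg
          ((hφsq.const_mul _).add (hZsq.const_mul _)) fun x => ?_
        have hyoung : -(φ t x * Z x) ≤ (t - s) * (s₀ / 2) * φ t x ^ 2 +
            (2 * s₀ * (1 - η) * (t - s))⁻¹ * ((1 - η) * Z x ^ 2) := by
          field_simp
          nlinarith [sq_nonneg ((t - s) * s₀ * φ t x + Z x)]
        linarith [mul_le_mul_of_nonneg_left hyoung (hω.nonneg x)]
    _ ≤ (t - s) * (s₀ / 2) * (∫ x, ω x * φ t x ^ 2) + (2 * s₀ * (1 - η) * (t - s))⁻¹ *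
          ((t - s) * ∫ τ in s..t, ∫ x, ω x * massFlux n u τ x ^ 2) := by
        rw [integral_add (hφsq.const_mul _) (hZsq.const_mul _), integral_const_mul,
          integral_const_mul]
        exact add_le_add_right (mul_le_mul_of_nonneg_left hmismatch (by positivity)) _
    _ = _ := by field_simp

lemma integral_weight_mul_spaceDeriv_phi_mul_displacement (h : IsSmallSolution w n u φ)
    (hω : IsSlowWeight η ω) (s t : ℝ) :
    ∫ x, ω x * (spaceDeriv φ t x * displacement n u s t x) =
      ∫ τ in s..t, ∫ x, ω x * (massFlux n u τ x * spaceDeriv φ t x) := by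
  rw [← ((h.l2Bounded_massFlux.mul
    (.const (continuous_slice h.l2Bounded_spaceDeriv_phi.continuous t)
      (h.l2Bounded_spaceDeriv_phi.memLp t))).weight_mul hω.continuous
    hω.abs_le_one).integral_intervalIntegral_swap s t]
  congr 1 with x
  rw [intervalIntegral.integral_const_mul, intervalIntegral.integral_mul_const, displacement,
    mul_comm (spaceDeriv φ t x)]

lemma intervalIntegral_weight_mul_field_work_sub_le (h : IsSmallSolution w n u φ)
    (hω : IsSlowWeight η ω) (hη : η ≤ 1) (hA : ∀ τ, ∫ x, ω x * massFlux n u τ x ^ 2 ≤ A)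
    (hst : s ≤ t) :
    (∫ τ in s..t, ∫ x, ω x * (massFlux n u τ x * spaceDeriv φ t x)) -
      (∫ τ in s..t, ∫ x, ω x * (massFlux n u τ x * spaceDeriv φ τ x)) ≤ A * (t - s) ^ 2 := by
  have hA0 : 0 ≤ A := (integral_nonneg fun x => mul_nonneg (hω.nonneg x) (sq_nonneg _)).trans (hA s)
  have hwork := h.l2Bounded_massFlux.mul h.l2Bounded_spaceDeriv_phi
  have hwork_t := h.l2Bounded_massFlux.mul (.const (continuous_slice
    h.l2Bounded_spaceDeriv_phi.continuous t) (h.l2Bounded_spaceDeriv_phi.memLp t))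
  have hI := (hwork.weight_mul hω.continuous hω.abs_le_one).intervalIntegrable_integral s t
  have hI_t := (hwork_t.weight_mul hω.continuous hω.abs_le_one).intervalIntegrable_integral s t
  rw [← intervalIntegral.integral_sub hI_t hI]
  calc ∫ τ in s..t, ((∫ x, ω x * (massFlux n u τ x * spaceDeriv φ t x)) -
        ∫ x, ω x * (massFlux n u τ x * spaceDeriv φ τ x)) ≤ ∫ _ in s..t, A * (t - s) := by
        refine intervalIntegral.integral_mono_on hst (hI_t.sub hI)
          intervalIntegrable_const fun τ hτ => ?_
        rw [← integral_sub (hω.integrable_mul (hwork_t.integrable τ))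
          (hω.integrable_mul (hwork.integrable τ))]
        simp only [← mul_sub]
        exact (h.integral_weight_mul_massFlux_mul_sub_le hω hη hA hτ.2).trans
          (mul_le_mul_of_nonneg_left (by linarith [hτ.1]) hA0)
    _ = A * (t - s) ^ 2 := by
        rw [intervalIntegral.integral_const, smul_eq_mul]
        ring

lemma integral_weight_mul_energyDensity_sub (h : IsSmallSolution w n u φ)
    (hω : IsSlowWeight η ω) (s t : ℝ) :
    ∫ x, ω x * (energyDensity w (n t) (u t) (φ t) x - energyDensity w (n s) (u s) (φ s) x) =
      (∫ x, ω x * (hydroEnergy w n u t x - hydroEnergy w n u s x)) +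
        ∫ x, ω x * (potentialEnergy (φ t) x - potentialEnergy (φ s) x) := by
  have hH : Integrable fun x => ω x * (hydroEnergy w n u t x - hydroEnergy w n u s x) :=
    hω.integrable_mul ((h.l1Bounded_hydroEnergy.integrable t).sub
      (h.l1Bounded_hydroEnergy.integrable s))
  have hP : Integrable fun x => ω x * (potentialEnergy (φ t) x - potentialEnergy (φ s) x) :=
    hω.integrable_mul ((h.l1Bounded_potentialEnergy.integrable t).sub
      (h.l1Bounded_potentialEnergy.integrable s))
  rw [← integral_add hH hP]
  congr 1 with x
  rw [energyDensity_eq, energyDensity_eq]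
  ring

-- The work of the field is evaluated at the final time in the potential energy and at the
-- current time in the hydrodynamic energy: the discrepancy is of second order.
lemma integral_weight_mul_energyDensity_sub_le (h : IsSmallSolution w n u φ)
    (hχ : IsSlowWeight η χ) (hχ' : IsSlowWeight η (deriv χ)) (hη : η ≤ 1)
    (hA : ∀ τ, ∫ x, χ x * massFlux n u τ x ^ 2 ≤ A) (hst : s ≤ t) :
    ∫ x, χ x * (energyDensity w (n t) (u t) (φ t) x - energyDensity w (n s) (u s) (φ s) x) ≤
      (∫ τ in s..t, ∫ x, deriv χ x * (massFlux n u τ x * bernoulliHead w n u τ x)) -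
        (∫ x, deriv χ x * (φ t x * fieldMismatch (φ s) (φ t) (displacement n u s t) x)) +
          A * (t - s) ^ 2 := by
  have hhead := ((h.l2Bounded_massFlux.mul h.l2Bounded_bernoulliHead).weight_mul
    hχ'.continuous hχ'.abs_le_one).intervalIntegrable_integral s t
  have hwork := ((h.l2Bounded_massFlux.mul h.l2Bounded_spaceDeriv_phi).weight_mul
    hχ.continuous hχ.abs_le_one).intervalIntegrable_integral s t
  have hdiscrepancy := h.intervalIntegral_weight_mul_field_work_sub_le hχ hη hA hst
  have hhydro := h.integral_weight_mul_hydroEnergy_sub hχ s t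
  rw [intervalIntegral.integral_sub hhead hwork] at hhydro
  have hpotential := (h.potential s).integral_weight_mul_potentialEnergy_sub_le (h.potential t)
    (h.hasDerivAt_displacement s t) (h.memLp_displacement hst) hχ
  have hfinal := h.integral_weight_mul_spaceDeriv_phi_mul_displacement hχ s t
  rw [h.integral_weight_mul_energyDensity_sub hχ]
  simp only [spaceDeriv] at hfinal hdiscrepancy hhydro
  linarith

end IsSmallSolution

/-! ### Energy to the right of a moving front -/

/-- Pointwise bounds under which a front of speed `σ` outruns the energy: its speed times the
hydrodynamic energy dominates the hydrodynamic flux, its speed times the electric energy dominates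
the work of the field, the latter having been split by Young's inequality with parameter `s₀`. -/
structure IsSupersonicSpeed (s₀ η σ : ℝ) (w : ℝ → ℝ) (n u φ : ℝ → ℝ → ℝ) : Prop where
  flux_le : ∀ t x, massFlux n u t x * bernoulliHead w n u t x +
    (2 * s₀ * (1 - η))⁻¹ * massFlux n u t x ^ 2 ≤ σ * hydroEnergy w n u t x
  sq_phi_le : ∀ t x, s₀ / 2 * φ t x ^ 2 ≤ σ * Rfun (φ t x)
  hydroEnergy_nonneg : ∀ t x, 0 ≤ hydroEnergy w n u t x
  eq_zero : ∀ t x, hydroEnergy w n u t x = 0 → n t x = 0 ∧ u t x = 0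

lemma IsSupersonicSpeed.energyDensity_nonneg {w : ℝ → ℝ} {n u φ : ℝ → ℝ → ℝ} {s₀ η σ : ℝ}
    (hσ : IsSupersonicSpeed s₀ η σ w n u φ) (t x : ℝ) :
    0 ≤ energyDensity w (n t) (u t) (φ t) x := by
  rw [energyDensity_eq]
  exact add_nonneg (hσ.hydroEnergy_nonneg t x) (potentialEnergy_nonneg _ x)

/-- The energy to the right of the front `σ * t`, measured with a smooth transition of
width `1 / η`. -/
def frontEnergy (η σ : ℝ) (w : ℝ → ℝ) (n u φ : ℝ → ℝ → ℝ) (t : ℝ) : ℝ :=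
  ∫ x, cutoff η (x - σ * t) * energyDensity w (n t) (u t) (φ t) x

namespace IsSmallSolution

variable {w : ℝ → ℝ} {n u φ : ℝ → ℝ → ℝ} {η s₀ σ A B : ℝ} {ω χ : ℝ → ℝ} {s t : ℝ}

lemma intervalIntegral_weight_mul_flux_le (h : IsSmallSolution w n u φ)
    (hσ : IsSupersonicSpeed s₀ η σ w n u φ) (hω : IsSlowWeight η ω) (hst : s ≤ t) :
    (∫ τ in s..t, ∫ x, ω x * (massFlux n u τ x * bernoulliHead w n u τ x)) +
      (2 * s₀ * (1 - η))⁻¹ * (∫ τ in s..t, ∫ x, ω x * massFlux n u τ x ^ 2) ≤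
        σ * ∫ τ in s..t, ∫ x, ω x * hydroEnergy w n u τ x := by
  have hflux := (h.l2Bounded_massFlux.mul h.l2Bounded_bernoulliHead).weight_mul
    hω.continuous hω.abs_le_one
  have hsq := h.l2Bounded_massFlux.sq.weight_mul hω.continuous hω.abs_le_one
  have hleft := hflux.add (hsq.const_mul (2 * s₀ * (1 - η))⁻¹)
  have hright := (h.l1Bounded_hydroEnergy.weight_mul hω.continuous hω.abs_le_one).const_mul σ
  rw [← intervalIntegral.integral_const_mul, ← intervalIntegral.integral_const_mul,
    ← intervalIntegral.integral_add (hflux.intervalIntegrable_integral s t)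
      ((hsq.intervalIntegrable_integral s t).const_mul _)]
  simp only [← integral_const_mul]
  refine intervalIntegral.integral_mono_on hst ?_ (hright.intervalIntegrable_integral s t)
    fun τ _ => ?_
  · exact (hflux.intervalIntegrable_integral s t).add
      ((hsq.const_mul _).intervalIntegrable_integral s t)
  · rw [← integral_add (hflux.integrable τ) ((hsq.const_mul _).integrable τ)]
    refine integral_mono (hleft.integrable τ) (hright.integrable τ) fun x => ?_
    linarith [mul_le_mul_of_nonneg_left (hσ.flux_le τ x) (hω.nonneg x)]

lemma intervalIntegral_weight_mul_hydroEnergy_le (h : IsSmallSolution w n u φ)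
    (hω : IsSlowWeight η ω) (hB : ∀ τ, |∫ x, ω x * hydroPower w n u τ x| ≤ B) (hst : s ≤ t) :
    ∫ τ in s..t, ∫ x, ω x * hydroEnergy w n u τ x ≤
      (t - s) * (∫ x, ω x * hydroEnergy w n u t x) + B * (t - s) ^ 2 := by
  have hH := h.l1Bounded_hydroEnergy.weight_mul hω.continuous hω.abs_le_one
  have hB0 : 0 ≤ B := (abs_nonneg _).trans (hB s)
  have hvariation : ∀ τ ≤ t, (∫ x, ω x * hydroEnergy w n u τ x) -
      (∫ x, ω x * hydroEnergy w n u t x) ≤ B * (t - τ) := fun τ hτ => by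
    rw [← integral_sub (hH.integrable τ) (hH.integrable t)]
    simp only [← mul_sub]
    rw [h.l1Bounded_hydroPower.integral_weight_mul_sub (h.hasDerivAt_hydroEnergy h.enthalpy)
      hω.continuous hω.abs_le_one]
    refine (le_abs_self _).trans ?_
    rw [← abs_of_nonneg (sub_nonneg.2 hτ), abs_sub_comm]
    exact intervalIntegral.norm_integral_le_of_norm_le_const
      (f := fun r => ∫ x, ω x * hydroPower w n u r x) fun r _ => hB r
  calc ∫ τ in s..t, ∫ x, ω x * hydroEnergy w n u τ x
      ≤ ∫ _ in s..t, ((∫ x, ω x * hydroEnergy w n u t x) + B * (t - s)) :=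
        intervalIntegral.integral_mono_on hst (hH.intervalIntegrable_integral s t)
          intervalIntegrable_const fun τ hτ => by
            linarith [hvariation τ hτ.2,
              mul_le_mul_of_nonneg_left (sub_le_sub_left hτ.1 t) hB0]
    _ = _ := by
        rw [intervalIntegral.integral_const, smul_eq_mul]
        ring

lemma integral_weight_mul_sq_phi_le (h : IsSmallSolution w n u φ)
    (hσ : IsSupersonicSpeed s₀ η σ w n u φ) (hσ0 : 0 ≤ σ) (hω : IsSlowWeight η ω) (t : ℝ) :
    s₀ / 2 * (∫ x, ω x * φ t x ^ 2) ≤ σ * ∫ x, ω x * potentialEnergy (φ t) x := by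
  rw [← integral_const_mul, ← integral_const_mul]
  refine integral_mono ((hω.integrable_mul (h.l2Bounded_phi.sq.integrable t)).const_mul _)
    ((hω.integrable_mul (h.l1Bounded_potentialEnergy.integrable t)).const_mul _) fun x => ?_
  have hfield : s₀ / 2 * φ t x ^ 2 ≤ σ * potentialEnergy (φ t) x :=
    (hσ.sq_phi_le t x).trans (mul_le_mul_of_nonneg_left
      (le_add_of_nonneg_left (by positivity)) hσ0)
  linarith [mul_le_mul_of_nonneg_left hfield (hω.nonneg x)]

lemma integral_weight_mul_energyDensity (h : IsSmallSolution w n u φ) (hω : IsSlowWeight η ω)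
    (t : ℝ) : ∫ x, ω x * energyDensity w (n t) (u t) (φ t) x =
      (∫ x, ω x * hydroEnergy w n u t x) + ∫ x, ω x * potentialEnergy (φ t) x := by
  rw [← integral_add (hω.integrable_mul (h.l1Bounded_hydroEnergy.integrable t))
    (hω.integrable_mul (h.l1Bounded_potentialEnergy.integrable t))]
  simp only [energyDensity_eq, mul_add]

lemma integral_weight_mul_energyDensity_sub_le_mul (h : IsSmallSolution w n u φ)
    (hσ : IsSupersonicSpeed s₀ η σ w n u φ) (hσ0 : 0 ≤ σ) (hs₀ : 0 < s₀) (hη : η < 1)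
    (hχ : IsSlowWeight η χ) (hχ' : IsSlowWeight η (deriv χ))
    (hA : ∀ τ, ∫ x, χ x * massFlux n u τ x ^ 2 ≤ A)
    (hB : ∀ τ, |∫ x, deriv χ x * hydroPower w n u τ x| ≤ B) (hst : s ≤ t) :
    ∫ x, χ x * (energyDensity w (n t) (u t) (φ t) x - energyDensity w (n s) (u s) (φ s) x) ≤
      σ * (t - s) * (∫ x, deriv χ x * energyDensity w (n t) (u t) (φ t) x) +
        (A + σ * B) * (t - s) ^ 2 := by
  rcases hst.eq_or_lt with rfl | hlt
  · simp
  have htransport := h.integral_weight_mul_energyDensity_sub_le hχ hχ' hη.le hA hst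
  have hyoung := h.neg_integral_weight_mul_phi_mul_fieldMismatch_le hχ' hη hs₀ hlt
  have hflux := h.intervalIntegral_weight_mul_flux_le hσ hχ' hst
  have hfield := mul_le_mul_of_nonneg_left (h.integral_weight_mul_sq_phi_le hσ hσ0 hχ' t)
    (sub_nonneg.2 hst)
  have hhydro := mul_le_mul_of_nonneg_left
    (h.intervalIntegral_weight_mul_hydroEnergy_le hχ' hB hst) hσ0
  rw [h.integral_weight_mul_energyDensity hχ']
  linarith

lemma frontEnergy_le (h : IsSmallSolution w n u φ) (hσ : IsSupersonicSpeed s₀ η σ w n u φ)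
    (hσ0 : 0 ≤ σ) (hη0 : 0 ≤ η) (hη : η ≤ 1) (hst : s ≤ t) :
    frontEnergy η σ w n u φ t ≤
      (∫ x, cutoff η (x - σ * s) * energyDensity w (n t) (u t) (φ t) x) -
        σ * (t - s) * (∫ x, deriv (cutoff η) (x - σ * s) * energyDensity w (n t) (u t) (φ t) x) +
          (σ * (t - s)) ^ 2 * ∫ x, energyDensity w (n t) (u t) (φ t) x := by
  have hχ := isSlowWeight_cutoff hη0
  have hχ' := isSlowWeight_deriv_cutoff hη0 hη
  have he := h.l1Bounded_energyDensity.integrable t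
  have hvalue := (hχ.comp_sub_const (σ * s)).integrable_mul he
  have hslope := ((hχ'.comp_sub_const (σ * s)).integrable_mul he).const_mul (σ * (t - s))
  have herror := he.const_mul ((σ * (t - s)) ^ 2)
  have hlinear : Integrable fun x => cutoff η (x - σ * s) * energyDensity w (n t) (u t) (φ t) x -
      σ * (t - s) * (deriv (cutoff η) (x - σ * s) * energyDensity w (n t) (u t) (φ t) x) :=
    hvalue.sub hslope
  rw [← integral_const_mul, ← integral_const_mul, ← integral_sub hvalue hslope,
    ← integral_add hlinear herror]
  refine integral_mono ((hχ.comp_sub_const (σ * t)).integrable_mul he)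
    (hlinear.add herror) fun x => ?_
  have htaylor := hχ.apply_sub_le hχ' hη (x - σ * s) (mul_nonneg hσ0 (sub_nonneg.2 hst))
  rw [show x - σ * s - σ * (t - s) = x - σ * t by ring] at htaylor
  linarith [mul_le_mul_of_nonneg_right htaylor (hσ.energyDensity_nonneg t x)]

lemma exists_frontEnergy_sub_le (h : IsSmallSolution w n u φ)
    (hσ : IsSupersonicSpeed s₀ η σ w n u φ) (hσ0 : 0 ≤ σ) (hs₀ : 0 < s₀) (hη0 : 0 ≤ η)
    (hη : η < 1) : ∃ C, ∀ s t, s ≤ t →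
      frontEnergy η σ w n u φ t - frontEnergy η σ w n u φ s ≤ C * (t - s) ^ 2 := by
  obtain ⟨A, hA⟩ := h.l2Bounded_massFlux.sq.exists_abs_integral_weight_mul_le
  obtain ⟨B, hB⟩ := h.l1Bounded_hydroPower.exists_abs_integral_weight_mul_le
  obtain ⟨E, hE⟩ := h.l1Bounded_energyDensity.bound
  refine ⟨A + σ * B + σ ^ 2 * E, fun s t hst => ?_⟩
  have he := h.l1Bounded_energyDensity.integrable
  have hderiv : deriv (fun x => cutoff η (x - σ * s)) = fun x => deriv (cutoff η) (x - σ * s) :=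
    funext (deriv_comp_sub_const _ _)
  have hχ := (isSlowWeight_cutoff hη0).comp_sub_const (σ * s)
  have hχ' : IsSlowWeight η (deriv fun x => cutoff η (x - σ * s)) := by
    rw [hderiv]
    exact (isSlowWeight_deriv_cutoff hη0 hη.le).comp_sub_const _
  have htransport := h.integral_weight_mul_energyDensity_sub_le_mul hσ hσ0 hs₀ hη hχ hχ'
    (fun τ => (le_abs_self _).trans (hA _ hχ.continuous hχ.abs_le_one τ))
    (hB _ hχ'.continuous hχ'.abs_le_one) hst
  simp only [hderiv, mul_sub (cutoff η _)] at htransport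
  rw [integral_sub (hχ.integrable_mul (he t)) (hχ.integrable_mul (he s))] at htransport
  have hshift := h.frontEnergy_le hσ hσ0 hη0 hη.le hst
  have htotal := mul_le_mul_of_nonneg_left
    ((integral_mono (he t) (he t).abs fun x => le_abs_self _).trans (hE t))
    (sq_nonneg (σ * (t - s)))
  have hfront : frontEnergy η σ w n u φ s =
    ∫ x, cutoff η (x - σ * s) * energyDensity w (n s) (u s) (φ s) x := rfl
  linarith

lemma antitone_frontEnergy (h : IsSmallSolution w n u φ)
    (hσ : IsSupersonicSpeed s₀ η σ w n u φ) (hσ0 : 0 ≤ σ) (hs₀ : 0 < s₀) (hη0 : 0 ≤ η)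
    (hη : η < 1) : Antitone (frontEnergy η σ w n u φ) :=
  let ⟨_, hC⟩ := h.exists_frontEnergy_sub_le hσ hσ0 hs₀ hη0 hη
  antitone_of_sub_le_mul_sq hC

end IsSmallSolution

/-! ### Compactness -/

section Compactness

open Filter Topology

lemma tendsto_atTop_of_le_hasDerivAt {f f' : ℝ → ℝ} {c : ℝ} (hf : ∀ x, HasDerivAt f (f' x) x)
    (hc : 0 < c) (h : ∀ x, c ≤ f' x) : Tendsto f atTop atTop := by
  refine tendsto_atTop_mono' atTop (f₁ := fun x => c * x + f 0) ?_
    (tendsto_atTop_add_const_right _ _ (tendsto_id.const_mul_atTop hc))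
  filter_upwards [eventually_ge_atTop 0] with x hx
  linarith [mul_sub_le_sub_of_le_hasDerivAt hf hx fun z _ _ => h z]

lemma tendsto_atBot_of_le_hasDerivAt {f f' : ℝ → ℝ} {c : ℝ} (hf : ∀ x, HasDerivAt f (f' x) x)
    (hc : 0 < c) (h : ∀ x, c ≤ f' x) : Tendsto f atBot atBot := by
  refine tendsto_atBot_mono' atBot (f₁ := fun x => c * x + f 0) ?_
    (tendsto_atBot_add_const_right _ _ (tendsto_id.const_mul_atBot hc))
  filter_upwards [eventually_le_atBot 0] with x hx
  linarith [mul_sub_le_sub_of_le_hasDerivAt hf hx fun z _ _ => h z]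

/-- Time-dependent weights that become negligible, along the filter `l`, on every bounded
neighbourhood of the moving point `y t`. -/
def LeavesCore (ω : ℝ → ℝ → ℝ) (y : ℝ → ℝ) (l : Filter ℝ) : Prop :=
  ∀ R κ : ℝ, 0 < κ → ∀ᶠ t in l, ∀ x, |x - y t| ≤ R → ω t x ≤ κ

lemma tendsto_cutoff_atBot {η : ℝ} (hη : 0 < η) : Tendsto (cutoff η) atBot (𝓝 0) :=
  tendsto_sigmoid_atBot.comp (tendsto_id.const_mul_atBot hη)

lemma leavesCore_cutoff {η : ℝ} (hη : 0 < η) {a y : ℝ → ℝ} {l : Filter ℝ}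
    (h : Tendsto (fun t => y t - a t) l atBot) :
    LeavesCore (fun t x => cutoff η (x - a t)) y l := fun R κ hκ => by
  obtain ⟨A, hA⟩ := eventually_atBot.1 ((tendsto_cutoff_atBot hη).eventually_le_const hκ)
  filter_upwards [h.eventually_le_atBot (A - R)] with t ht x hx
  exact hA _ (by linarith [(abs_le.1 hx).2])

lemma leavesCore_cutoff_neg {η : ℝ} (hη : 0 < η) {a y : ℝ → ℝ} {l : Filter ℝ}
    (h : Tendsto (fun t => y t - a t) l atTop) :
    LeavesCore (fun t x => cutoff η (-(x - a t))) y l := fun R κ hκ => by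
  obtain ⟨A, hA⟩ := eventually_atBot.1 ((tendsto_cutoff_atBot hη).eventually_le_const hκ)
  filter_upwards [h.eventually_ge_atTop (R - A)] with t ht x hx
  exact hA _ (by linarith [(abs_le.1 hx).1])

lemma integral_weight_mul_le_setIntegral_add {f ω : ℝ → ℝ} {S : Set ℝ} {κ : ℝ}
    (hf : Integrable f) (hf0 : ∀ x, 0 ≤ f x) (hω : Continuous ω) (hω0 : ∀ x, 0 ≤ ω x)
    (hω1 : ∀ x, ω x ≤ 1) (hS : MeasurableSet S) (hκ : 0 ≤ κ) (hsmall : ∀ x, x ∉ S → ω x ≤ κ) :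
    ∫ x, ω x * f x ≤ (∫ x in S, f x) + κ * ∫ x, f x := by
  rw [← integral_indicator hS, ← integral_const_mul,
    ← integral_add (hf.indicator hS) (hf.const_mul κ)]
  have hbound : ∀ x, ‖ω x‖ ≤ 1 := fun x => by
    rw [norm_of_nonneg (hω0 x)]
    exact hω1 x
  refine integral_mono (hf.bdd_mul hω.aestronglyMeasurable (.of_forall hbound))
    ((hf.indicator hS).add (hf.const_mul κ)) fun x => ?_
  by_cases hx : x ∈ S
  · simp only [Set.indicator_of_mem hx]
    linarith [mul_le_of_le_one_left (hf0 x) (hω1 x), mul_nonneg hκ (hf0 x)]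
  · simp only [Set.indicator_of_notMem hx, zero_add]
    exact mul_le_mul_of_nonneg_right (hsmall x hx) (hf0 x)

lemma L2CompactWith.tendsto_integral_weight_mul {n u : ℝ → ℝ → ℝ} {y : ℝ → ℝ} {ω : ℝ → ℝ → ℝ}
    {η : ℝ} {l : Filter ℝ} (hc : L2CompactWith n u y) (hn : L2Bounded n) (hu : L2Bounded u)
    (hω : ∀ t, IsSlowWeight η (ω t)) (hcore : LeavesCore ω y l) :
    Tendsto (fun t => ∫ x, ω t x * (n t x ^ 2 + u t x ^ 2)) l (𝓝 0) := by
  have hsum := hn.sq.add hu.sq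
  have hnonneg : ∀ t x, 0 ≤ n t x ^ 2 + u t x ^ 2 := fun t x => by positivity
  obtain ⟨M, hM⟩ := hsum.bound
  have hM' : ∀ t, ∫ x, (n t x ^ 2 + u t x ^ 2) ≤ M := fun t => by
    simpa only [abs_of_nonneg (hnonneg t _)] using hM t
  have hM0 : 0 ≤ M := (integral_nonneg (hnonneg 0)).trans (hM' 0)
  refine Metric.tendsto_nhds.2 fun e he => ?_
  obtain ⟨R, -, hR⟩ := hc (e / 2) (half_pos he)
  filter_upwards [hcore R (e / (2 * (M + 1))) (by positivity)] with t ht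
  have hS : MeasurableSet {x : ℝ | R < |x - y t|} :=
    (isOpen_lt continuous_const (by fun_prop)).measurableSet
  have hsplit := integral_weight_mul_le_setIntegral_add (hsum.integrable t) (hnonneg t)
    (hω t).continuous (hω t).nonneg (hω t).le_one hS (κ := e / (2 * (M + 1))) (by positivity)
    fun x hx => ht x (not_lt.1 hx)
  have hcore_small : e / (2 * (M + 1)) * ∫ x, (n t x ^ 2 + u t x ^ 2) ≤ e / 2 :=
    calc _ ≤ e / (2 * (M + 1)) * (M + 1) :=
          mul_le_mul_of_nonneg_left ((hM' t).trans (by linarith)) (by positivity)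
      _ = e / 2 := by field_simp
  rw [dist_zero_right, norm_of_nonneg
    (integral_nonneg fun x => mul_nonneg ((hω t).nonneg x) (hnonneg t x))]
  linarith [hR t]

namespace IsSmallSolution

variable {w : ℝ → ℝ} {n u φ ω : ℝ → ℝ → ℝ} {y : ℝ → ℝ} {η s₀ σ c : ℝ} {l : Filter ℝ}

lemma integral_weight_mul_potentialEnergy_le (h : IsSmallSolution w n u φ) {ω : ℝ → ℝ}
    (hω : IsSlowWeight (1 / 2) ω) (t : ℝ) :
    ∫ x, ω x * potentialEnergy (φ t) x ≤ 8 * ∫ x, ω x * n t x ^ 2 := by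
  have hPE := hω.integrable_mul (h.l1Bounded_potentialEnergy.integrable t)
  have hquad : Integrable fun x => spaceDeriv φ t x ^ 2 / 2 + φ t x ^ 2 / 4 :=
    ((h.l2Bounded_spaceDeriv_phi.sq.integrable t).div_const 2).add
      ((h.l2Bounded_phi.sq.integrable t).div_const 4)
  calc ∫ x, ω x * potentialEnergy (φ t) x
      ≤ ∫ x, 4 * (ω x * (spaceDeriv φ t x ^ 2 / 2 + φ t x ^ 2 / 4)) := by
        refine integral_mono hPE ((hω.integrable_mul hquad).const_mul 4) fun x => ?_
        have hpotential : potentialEnergy (φ t) x ≤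
            4 * (spaceDeriv φ t x ^ 2 / 2 + φ t x ^ 2 / 4) := by
          simp only [potentialEnergy, spaceDeriv]
          linarith [Rfun_le_sq ((h.potential t).abs_le x), sq_nonneg (deriv (φ t) x)]
        linarith [mul_le_mul_of_nonneg_left hpotential (hω.nonneg x)]
    _ ≤ 8 * ∫ x, ω x * n t x ^ 2 := by
        have hfield := (h.potential t).integral_weight_mul_le (h.l2Bounded_density.memLp t) hω
        rw [integral_const_mul]
        simp only [spaceDeriv]
        linarith

lemma exists_integral_weight_mul_energyDensity_le (h : IsSmallSolution w n u φ) :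
    ∃ C, ∀ ω, IsSlowWeight (1 / 2) ω → ∀ t, ∫ x, ω x * energyDensity w (n t) (u t) (φ t) x ≤
      C * ∫ x, ω x * (n t x ^ 2 + u t x ^ 2) := by
  obtain ⟨C, hC⟩ := h.enthalpy.exists_bounds
  refine ⟨|C| + 9, fun ω hω t => ?_⟩
  have hn2 := hω.integrable_mul (h.l2Bounded_density.sq.integrable t)
  have hsum := hω.integrable_mul ((h.l2Bounded_density.sq.add h.l2Bounded_velocity.sq).integrable t)
  have hfield : ∫ x, ω x * n t x ^ 2 ≤ ∫ x, ω x * (n t x ^ 2 + u t x ^ 2) :=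
    integral_mono hn2 hsum fun x => mul_le_mul_of_nonneg_left
      (le_add_of_nonneg_right (sq_nonneg _)) (hω.nonneg x)
  have hhydro : ∫ x, ω x * hydroEnergy w n u t x ≤
      ∫ x, (|C| + 1) * (ω x * (n t x ^ 2 + u t x ^ 2)) := by
    refine integral_mono (hω.integrable_mul (h.l1Bounded_hydroEnergy.integrable t))
      (hsum.const_mul _) fun x => ?_
    have hpointwise : hydroEnergy w n u t x ≤ (|C| + 1) * (n t x ^ 2 + u t x ^ 2) := by
      have hW := (le_abs_self _).trans (hC _ (h.abs_density_le t x)).2.2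
      have hn := (abs_le.1 (h.abs_density_le t x)).2
      unfold hydroEnergy
      nlinarith [sq_nonneg (u t x), sq_nonneg (n t x), abs_nonneg C, le_abs_self C,
        mul_nonneg (abs_nonneg C) (sq_nonneg (u t x))]
    linarith [mul_le_mul_of_nonneg_left hpointwise (hω.nonneg x)]
  rw [integral_const_mul] at hhydro
  rw [h.integral_weight_mul_energyDensity hω]
  linarith [h.integral_weight_mul_potentialEnergy_le hω t]

lemma tendsto_integral_weight_mul_energyDensity (h : IsSmallSolution w n u φ)
    (hσ : IsSupersonicSpeed s₀ η σ w n u φ) (hc : L2CompactWith n u y)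
    (hω : ∀ t, IsSlowWeight (1 / 2) (ω t)) (hcore : LeavesCore ω y l) :
    Tendsto (fun t => ∫ x, ω t x * energyDensity w (n t) (u t) (φ t) x) l (𝓝 0) := by
  obtain ⟨C, hC⟩ := h.exists_integral_weight_mul_energyDensity_le
  have hupper := (hc.tendsto_integral_weight_mul h.l2Bounded_density h.l2Bounded_velocity hω
    hcore).const_mul C
  rw [mul_zero] at hupper
  exact tendsto_of_tendsto_of_tendsto_of_le_of_le tendsto_const_nhds hupper
    (fun t => integral_nonneg fun x => mul_nonneg ((hω t).nonneg x) (hσ.energyDensity_nonneg t x))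
    fun t => hC _ (hω t) t

lemma energy_sub_frontEnergy (h : IsSmallSolution w n u φ) (hη : 0 ≤ η) (σ t : ℝ) :
    energy w (n t) (u t) (φ t) - frontEnergy η σ w n u φ t =
      ∫ x, cutoff η (-(x - σ * t)) * energyDensity w (n t) (u t) (φ t) x := by
  have he := h.l1Bounded_energyDensity.integrable t
  rw [energy, frontEnergy,
    ← integral_sub he (((isSlowWeight_cutoff hη).comp_sub_const _).integrable_mul he)]
  congr 1 with x
  rw [cutoff, cutoff, mul_neg, sigmoid_neg]
  ring

lemma energy_nonpos (h : IsSmallSolution w n u φ) (hσ : IsSupersonicSpeed s₀ η σ w n u φ)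
    (hσ0 : 0 ≤ σ) (hs₀ : 0 < s₀) (hη0 : 0 < η) (hη : η ≤ 1 / 2) (hc : L2CompactWith n u y)
    (hE : ConservesEnergy w n u φ) (hbehind : Tendsto (fun t => y t - σ * t) atBot atBot)
    (hahead : Tendsto (fun t => y t - σ * t) atTop atTop) (t : ℝ) :
    energy w (n t) (u t) (φ t) ≤ 0 := by
  have hanti := h.antitone_frontEnergy hσ hσ0 hs₀ hη0.le (by linarith)
  have hcutoff := (isSlowWeight_cutoff hη0.le).mono hη
  have hpast : Tendsto (frontEnergy η σ w n u φ) atBot (𝓝 0) :=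
    h.tendsto_integral_weight_mul_energyDensity hσ hc (fun t => hcutoff.comp_sub_const (σ * t))
      (leavesCore_cutoff hη0 hbehind)
  have hfuture := h.tendsto_integral_weight_mul_energyDensity hσ hc
    (fun t => hcutoff.comp_neg.comp_sub_const (σ * t)) (leavesCore_cutoff_neg hη0 hahead)
  simp only [← h.energy_sub_frontEnergy hη0.le, hE _ t] at hfuture
  have hfuture' : Tendsto (frontEnergy η σ w n u φ) atTop (𝓝 (energy w (n t) (u t) (φ t))) := by
    simpa using hfuture.const_sub (energy w (n t) (u t) (φ t))
  exact (hanti.le_of_tendsto hfuture' 0).trans (hanti.ge_of_tendsto hpast 0)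

lemma eq_zero_of_energy_nonpos (h : IsSmallSolution w n u φ)
    (hσ : IsSupersonicSpeed s₀ η σ w n u φ) (hs₀ : 0 < s₀) {t : ℝ}
    (hE : energy w (n t) (u t) (φ t) ≤ 0) (x : ℝ) : n t x = 0 ∧ u t x = 0 ∧ φ t x = 0 := by
  have hnonneg := hσ.energyDensity_nonneg t
  have hdensity : energyDensity w (n t) (u t) (φ t) = 0 := by
    have hae := (integral_eq_zero_iff_of_nonneg hnonneg (h.l1Bounded_energyDensity.integrable t)).1
      (hE.antisymm (integral_nonneg hnonneg))
    exact Continuous.ae_eq_iff_eq volume (continuous_slice h.l1Bounded_energyDensity.continuous t)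
      continuous_const |>.1 hae
  have hx : hydroEnergy w n u t x + potentialEnergy (φ t) x = 0 := by
    rw [← energyDensity_eq]
    exact congrFun hdensity x
  have hH := hσ.hydroEnergy_nonneg t x
  have hP := potentialEnergy_nonneg (φ t) x
  have hR : Rfun (φ t x) = 0 := by
    have hdef : potentialEnergy (φ t) x = 1 / 2 * deriv (φ t) x ^ 2 + Rfun (φ t x) := rfl
    linarith [Rfun_nonneg (φ t x), sq_nonneg (deriv (φ t) x)]
  have hφ := hσ.sq_phi_le t x
  rw [hR, mul_zero] at hφ
  obtain ⟨hn, hu⟩ := hσ.eq_zero t x (by linarith)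
  exact ⟨hn, hu, pow_eq_zero_iff two_ne_zero |>.1
    (le_antisymm (by nlinarith) (sq_nonneg _))⟩

lemma eq_zero_of_l2Compact (h : IsSmallSolution w n u φ)
    (hσ : IsSupersonicSpeed s₀ η σ w n u φ) (hσ0 : 0 ≤ σ) (hs₀ : 0 < s₀) (hη0 : 0 < η)
    (hη : η ≤ 1 / 2) (hy : Differentiable ℝ y) (hc : L2CompactWith n u y)
    (hE : ConservesEnergy w n u φ) (hσc : σ < c) (hspeed : ∀ t, c ≤ deriv y t) (t x : ℝ) :
    n t x = 0 ∧ u t x = 0 ∧ φ t x = 0 := by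
  have hrel : ∀ t, HasDerivAt (fun t => y t - σ * t) (deriv y t - σ) t := fun t =>
    ((hy t).hasDerivAt.sub ((hasDerivAt_id t).const_mul σ)).congr_deriv (by rw [mul_one])
  have hgap : ∀ t, c - σ ≤ deriv y t - σ := fun t => sub_le_sub_right (hspeed t) σ
  exact h.eq_zero_of_energy_nonpos hσ hs₀ (h.energy_nonpos hσ hσ0 hs₀ hη0 hη hc hE
    (tendsto_atBot_of_le_hasDerivAt hrel (sub_pos.2 hσc) hgap)
    (tendsto_atTop_of_le_hasDerivAt hrel (sub_pos.2 hσc) hgap) t) x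

end IsSmallSolution

end Compactness

/-! ### Supersonic speeds -/

/-- For perturbations of amplitude at most `θ` whose enthalpy is `θ`-close to linear with slope
`k`, fronts of speed `σ` outrun the linear waves, which travel at speed at most `s₀`. The three
inequalities compare the coefficients of `u²`, `n²` and `φ²` in the flux and in the energy. -/
structure IsSupersonicMargin (k s₀ σ θ : ℝ) : Prop where
  pos : 0 < θ
  le_half : θ ≤ 1 / 2
  lt_slope : θ < k
  velocity_le : θ + (k + θ) / s₀ + (1 + θ) / (s₀ * (1 - θ)) ≤ σ
  density_le : (k + θ) * s₀ * (1 + θ) ≤ σ * (k - θ)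
  potential_le : s₀ ≤ σ * (1 - 4 * θ)

lemma abs_mul_abs_le_young {s : ℝ} (hs : 0 < s) (a b : ℝ) :
    |a| * |b| ≤ a ^ 2 / (2 * s) + s * b ^ 2 / 2 := by
  rw [← sq_abs a, ← sq_abs b, div_add_div _ _ (by positivity) two_ne_zero,
    le_div_iff₀ (by positivity)]
  nlinarith [sq_nonneg (|a| - s * |b|)]

lemma exists_isSupersonicMargin {k s₀ σ : ℝ} (hk : 0 < k) (hs₀ : 0 < s₀) (hsq : s₀ ^ 2 = 1 + k)
    (hσ : s₀ < σ) : ∃ θ, IsSupersonicMargin k s₀ σ θ := by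
  have hvelocity : ∀ᶠ θ in nhds (0 : ℝ),
      θ + (k + θ) / s₀ + (1 + θ) / (s₀ * (1 - θ)) < σ := by
    refine ContinuousAt.eventually_lt (by fun_prop (disch := simp [hs₀.ne'])) continuousAt_const ?_
    have hlimit : 0 + (k + 0) / s₀ + (1 + 0) / (s₀ * (1 - 0)) = s₀ := by
      field_simp
      linarith
    rwa [hlimit]
  have hdensity : ∀ᶠ θ in nhds (0 : ℝ), (k + θ) * s₀ * (1 + θ) < σ * (k - θ) :=
    ContinuousAt.eventually_lt (by fun_prop) (by fun_prop) (by nlinarith)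
  have hpotential : ∀ᶠ θ in nhds (0 : ℝ), s₀ < σ * (1 - 4 * θ) :=
    ContinuousAt.eventually_lt continuousAt_const (by fun_prop) (by simpa using hσ)
  have hrange : ∀ᶠ θ in nhdsWithin (0 : ℝ) (Set.Ioi 0), θ ∈ Set.Ioo 0 (min (1 / 2) k) :=
    Ioo_mem_nhdsGT (lt_min one_half_pos hk)
  obtain ⟨θ, hθ, hv, hd, hp⟩ := (hrange.and
    ((hvelocity.and (hdensity.and hpotential)).filter_mono nhdsWithin_le_nhds)).exists
  exact ⟨θ, hθ.1, (hθ.2.trans_le (min_le_left _ _)).le, hθ.2.trans_le (min_le_right _ _),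
    hv.le, hd.le, hp.le⟩

namespace IsSupersonicMargin

variable {k s₀ σ θ : ℝ} {w : ℝ → ℝ}

lemma flux_le (hθ : IsSupersonicMargin k s₀ σ θ) (hs₀ : 0 < s₀) (hσ : 0 ≤ σ) {a v W E : ℝ}
    (ha : |a| ≤ θ) (hv : |v| ≤ θ) (hW : |W| ≤ (k + θ) * |a|) (hE : (k - θ) / 2 * a ^ 2 ≤ E) :
    (1 + a) * v * (v ^ 2 / 2 + W) + (2 * s₀ * (1 - θ))⁻¹ * ((1 + a) * v) ^ 2 ≤
      σ * (1 / 2 * (1 + a) * v ^ 2 + E) := by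
  have hθ0 := hθ.pos
  have hθ1 : 0 < 1 - θ := by linarith [hθ.le_half]
  have hslope := hθ.lt_slope
  have hk : 0 < k := hθ0.trans hslope
  have hρ0 : 0 ≤ 1 + a := by linarith [(abs_le.1 ha).1]
  have hρ : 1 + a ≤ 1 + θ := by linarith [(abs_le.1 ha).2]
  have htransport : v * v ^ 2 ≤ θ * v ^ 2 :=
    mul_le_mul_of_nonneg_right ((le_abs_self v).trans hv) (sq_nonneg v)
  have hpressure : v * W ≤ (k + θ) / s₀ * v ^ 2 / 2 + (k + θ) * s₀ * a ^ 2 / 2 := calc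
    v * W ≤ |v| * |W| := (le_abs_self _).trans (abs_mul v W).le
    _ ≤ |v| * ((k + θ) * |a|) := mul_le_mul_of_nonneg_left hW (abs_nonneg v)
    _ = (k + θ) * (|v| * |a|) := by ring
    _ ≤ (k + θ) * (v ^ 2 / (2 * s₀) + s₀ * a ^ 2 / 2) :=
      mul_le_mul_of_nonneg_left (abs_mul_abs_le_young hs₀ v a) (by linarith)
    _ = _ := by field_simp
  have hfield : (2 * s₀ * (1 - θ))⁻¹ * ((1 + a) * v) ^ 2 ≤
      (1 + a) * ((1 + θ) / (s₀ * (1 - θ)) * v ^ 2 / 2) := calc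
    _ = (1 + a) * ((1 + a) / (s₀ * (1 - θ)) * v ^ 2 / 2) := by field_simp
    _ ≤ _ := by gcongr
  have hvelocity : (1 + a) * ((θ + (k + θ) / s₀ + (1 + θ) / (s₀ * (1 - θ))) * v ^ 2 / 2) ≤
      (1 + a) * (σ * v ^ 2 / 2) := by
    gcongr
    exact hθ.velocity_le
  have hdensity : (1 + a) * ((k + θ) * s₀ * a ^ 2 / 2) ≤ σ * E := calc
    _ ≤ (1 + θ) * ((k + θ) * s₀ * a ^ 2 / 2) :=
      mul_le_mul_of_nonneg_right hρ (by positivity)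
    _ = (k + θ) * s₀ * (1 + θ) * (a ^ 2 / 2) := by ring
    _ ≤ σ * (k - θ) * (a ^ 2 / 2) := mul_le_mul_of_nonneg_right hθ.density_le (by positivity)
    _ = σ * ((k - θ) / 2 * a ^ 2) := by ring
    _ ≤ σ * E := by gcongr
  linarith [mul_le_mul_of_nonneg_left htransport hρ0, mul_le_mul_of_nonneg_left hpressure hρ0]

lemma sq_le_mul_Rfun (hθ : IsSupersonicMargin k s₀ σ θ) (hσ : 0 ≤ σ) {d a : ℝ}
    (hd : 2 * d ≤ 1 / 2) (hdθ : d ≤ θ) (ha : |a| ≤ 2 * d) : s₀ / 2 * a ^ 2 ≤ σ * Rfun a := by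
  have hR : (1 - 4 * θ) / 2 * a ^ 2 ≤ Rfun a := by
    linarith [(abs_le.1 (abs_Rfun_sub_half_sq_le hd ha)).1,
      mul_le_mul_of_nonneg_right hdθ (sq_nonneg a)]
  linarith [mul_le_mul_of_nonneg_left hR hσ,
    mul_le_mul_of_nonneg_right hθ.potential_le (sq_nonneg a)]

lemma isSupersonicSpeed (hθ : IsSupersonicMargin k s₀ σ θ) (hs₀ : 0 < s₀) (hσ : 0 ≤ σ)
    (hw : IsEnthalpy w) {d : ℝ} (hd : d ≤ 1 / 4) (hdθ : d ≤ θ)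
    (hlin : ∀ a, |a| ≤ d → |w a - k * a| ≤ θ * |a|) {n u φ : ℝ → ℝ → ℝ}
    (hn : ∀ t x, |n t x| ≤ d) (hu : ∀ t x, |u t x| ≤ d) (hφ : ∀ t x, |φ t x| ≤ 2 * d) :
    IsSupersonicSpeed s₀ θ σ w n u φ := by
  have hθk := sub_pos.2 hθ.lt_slope
  have hk : 0 < k := hθ.pos.trans hθ.lt_slope
  have hρ : ∀ t x, 0 < 1 + n t x := fun t x => by linarith [(abs_le.1 (hn t x)).1]
  have hw_le : ∀ t x, |w (n t x)| ≤ (k + θ) * |n t x| := fun t x => by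
    have h := abs_sub_le_iff.1 (abs_abs_sub_abs_le (w (n t x)) (k * n t x))
    rw [abs_mul, abs_of_pos hk] at h
    linarith [hlin _ (hn t x)]
  have hW_ge : ∀ t x, (k - θ) / 2 * n t x ^ 2 ≤ Wfun w (n t x) := fun t x => by
    linarith [(abs_le.1 (abs_sub_half_mul_sq_le (Wfun_zero w)
      (fun a ha => hw.hasDerivAt_Wfun (by linarith [(abs_le.1 ha).1])) hlin (hn t x))).1]
  have hW0 : ∀ t x, 0 ≤ Wfun w (n t x) := fun t x => (by positivity : (0 : ℝ) ≤ _).trans (hW_ge t x)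
  have hkin0 : ∀ t x, 0 ≤ 1 / 2 * (1 + n t x) * u t x ^ 2 := fun t x =>
    mul_nonneg (mul_nonneg one_half_pos.le (hρ t x).le) (sq_nonneg _)
  refine ⟨fun t x => ?_, fun t x => ?_, fun t x => ?_, fun t x h => ?_⟩
  · exact hθ.flux_le hs₀ hσ ((hn t x).trans hdθ) ((hu t x).trans hdθ) (hw_le t x) (hW_ge t x)
  · exact hθ.sq_le_mul_Rfun hσ (by linarith) hdθ (hφ t x)
  · exact add_nonneg (hkin0 t x) (hW0 t x)
  · obtain ⟨hkin, hW⟩ := (add_eq_zero_iff_of_nonneg (hkin0 t x) (hW0 t x)).1 h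
    have hn0 : (k - θ) / 2 * n t x ^ 2 = 0 :=
      le_antisymm ((hW_ge t x).trans_eq hW) (by positivity)
    exact ⟨by simpa [hθk.ne'] using hn0, by simpa [(hρ t x).ne'] using hkin⟩

end IsSupersonicMargin

/-! ### Solutions small in `H¹` -/

lemma eLpNorm_two_sq_eq_ofReal_integral_sq {α : Type*} [MeasurableSpace α] {μ : Measure α}
    {f : α → ℝ} (hf : MemLp f 2 μ) :
    eLpNorm f 2 μ ^ 2 = ENNReal.ofReal (∫ x, f x ^ 2 ∂μ) := by
  rw [hf.eLpNorm_eq_integral_rpow_norm two_ne_zero ENNReal.ofNat_ne_top,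
    ← ENNReal.ofReal_pow (by positivity), ← Real.rpow_natCast, ← Real.rpow_mul (by positivity)]
  simp

section H1

variable {f : ℝ → ℝ} {d : ℝ}

lemma H1norm_sq (f : ℝ → ℝ) :
    H1norm f ^ 2 = eLpNorm f 2 volume ^ 2 + eLpNorm (deriv f) 2 volume ^ 2 := by
  rw [H1norm, ← ENNReal.rpow_natCast _ 2, ← ENNReal.rpow_mul]
  simp

lemma memLp_two_of_H1norm_ne_top (hf : ContDiff ℝ 1 f) (h : H1norm f ≠ ∞) :
    MemLp f 2 ∧ MemLp (deriv f) 2 := by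
  have hsum := ENNReal.pow_ne_top (n := 2) h
  rw [H1norm_sq, ENNReal.add_ne_top, ENNReal.pow_ne_top_iff, ENNReal.pow_ne_top_iff] at hsum
  simp only [two_ne_zero, or_false] at hsum
  exact ⟨⟨hf.continuous.aestronglyMeasurable, hsum.1.lt_top⟩,
    (hf.continuous_deriv le_rfl).aestronglyMeasurable, hsum.2.lt_top⟩

lemma integral_sq_add_integral_deriv_sq_le_of_H1norm_le (hf : ContDiff ℝ 1 f) (hd : 0 ≤ d)
    (h : H1norm f ≤ ENNReal.ofReal d) : (∫ x, f x ^ 2) + (∫ x, deriv f x ^ 2) ≤ d ^ 2 := by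
  obtain ⟨hf2, hf'2⟩ := memLp_two_of_H1norm_ne_top hf (ne_top_of_le_ne_top ENNReal.ofReal_ne_top h)
  have hsq := pow_le_pow_left₀ bot_le h 2
  rwa [H1norm_sq, eLpNorm_two_sq_eq_ofReal_integral_sq hf2,
    eLpNorm_two_sq_eq_ofReal_integral_sq hf'2,
    ← ENNReal.ofReal_add (integral_nonneg fun _ => sq_nonneg _)
      (integral_nonneg fun _ => sq_nonneg _),
    ← ENNReal.ofReal_pow hd, ENNReal.ofReal_le_ofReal_iff (sq_nonneg d)] at hsq

lemma abs_le_of_H1norm_le (hf : ContDiff ℝ 1 f) (hd : 0 ≤ d) (h : H1norm f ≤ ENNReal.ofReal d)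
    (x : ℝ) : |f x| ≤ d := by
  obtain ⟨hf2, hf'2⟩ := memLp_two_of_H1norm_ne_top hf (ne_top_of_le_ne_top ENNReal.ofReal_ne_top h)
  exact abs_le_of_sq_le_sq ((sq_le_integral_sq_add_integral_deriv_sq
    (fun y => (hf.differentiable one_ne_zero y).hasDerivAt) hf2 hf'2 x).trans
    (integral_sq_add_integral_deriv_sq_le_of_H1norm_le hf hd h)) hd

lemma l2Bounded_of_H1norm_le {f : ℝ → ℝ → ℝ} (hf : ContDiff ℝ 1 (Function.uncurry f))
    (hd : 0 ≤ d) (h : ∀ t, H1norm (f t) ≤ ENNReal.ofReal d) :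
    L2Bounded f ∧ L2Bounded (spaceDeriv f) := by
  have hslice : ∀ t, ContDiff ℝ 1 (f t) := fun t => hf.comp (contDiff_prodMk_right t)
  have hmem := fun t =>
    memLp_two_of_H1norm_ne_top (hslice t) (ne_top_of_le_ne_top ENNReal.ofReal_ne_top (h t))
  have hsq := fun t => integral_sq_add_integral_deriv_sq_le_of_H1norm_le (hslice t) hd (h t)
  exact ⟨⟨hf.continuous, fun t => (hmem t).1, d ^ 2, fun t =>
      (le_add_of_nonneg_right (integral_nonneg fun _ => sq_nonneg _)).trans (hsq t)⟩,
    continuous_spaceDeriv hf, fun t => (hmem t).2, d ^ 2, fun t =>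
      (le_add_of_nonneg_left (integral_nonneg fun _ => sq_nonneg _)).trans (hsq t)⟩

end H1

namespace IsFinitePotential

variable {n φ : ℝ → ℝ}

lemma integral_sq_add_sq_le (h : IsFinitePotential n φ) (hn : MemLp n 2) :
    (∫ x, φ x ^ 2) + 2 * (∫ x, deriv φ x ^ 2) ≤ 8 * ∫ x, n x ^ 2 := by
  have hle := h.integral_weight_mul_le hn (IsSlowWeight.one.mono one_half_pos.le)
  simp only [one_mul] at hle
  rw [integral_add (h.memLp_deriv.integrable_sq.div_const 2) (h.memLp.integrable_sq.div_const 4),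
    integral_div, integral_div] at hle
  linarith

end IsFinitePotential

namespace IsEPwSolution

variable {w : ℝ → ℝ} {n u φ : ℝ → ℝ → ℝ} {d : ℝ}

lemma continuous_spaceDeriv_phi (h : IsEPwSolution w n u φ) (hw : IsEnthalpy w) :
    Continuous (Function.uncurry (spaceDeriv φ)) := by
  have heq : spaceDeriv φ = fun t x => -timeDeriv u t x -
      (u t x * spaceDeriv u t x + deriv w (n t x) * spaceDeriv n t x) :=
    funext₂ fun t x => by linarith [h.timeDeriv_velocity hw t x]
  rw [heq]
  exact (continuous_timeDeriv h.reg_u).neg.sub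
    ((h.reg_u.continuous.mul (continuous_spaceDeriv h.reg_u)).add
      ((h.continuous_comp_density hw.continuousOn_deriv).mul (continuous_spaceDeriv h.reg_n)))

lemma continuous_phi (h : IsEPwSolution w n u φ) (hw : IsEnthalpy w) :
    Continuous (Function.uncurry φ) :=
  continuous_uncurry_of_hasDerivAt h.hasDerivAt_phi (h.continuous_spaceDeriv_phi hw)
    (h.reg_phi_time 0).continuous

lemma abs_phi_le (h : IsEPwSolution w n u φ) (hw : IsEnthalpy w) (hd : 0 < d) (hd8 : d ≤ 1 / 8)
    (hn : ∀ t x, |n t x| ≤ d) (hu : ∀ t x, |u t x| ≤ d) (t x : ℝ) : |φ t x| ≤ 2 * d := by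
  obtain ⟨C, hC⟩ := hw.exists_bounds
  have hn2 : ∀ t x, |n t x| ≤ 1 / 2 := fun t x => (hn t x).trans (by linarith)
  have hhead : ∀ t x, |bernoulliHead w n u t x| ≤ d ^ 2 / 2 + |C| * d := fun t x => by
    refine (abs_add_le _ _).trans (add_le_add ?_ ?_)
    · rw [abs_of_nonneg (by positivity), ← sq_abs]
      gcongr
      exact hu t x
    · exact (hC _ (hn2 t x)).2.1.trans
        (mul_le_mul (le_abs_self C) (hn t x) (abs_nonneg _) (abs_nonneg _))
  refine abs_potential_le (F := fun t x => bernoulliHead w n u t x + φ t x)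
    (C := d + (d ^ 2 / 2 + |C| * d)) h.hasDerivAt_phi h.hasDerivAt_spaceDeriv_phi
    (continuous_time (h.continuous_phi hw)) (continuous_time (h.continuous_spaceDeriv_phi hw))
    (continuous_slice h.reg_u.continuous) (hasDerivAt_timeDeriv h.reg_u)
    (continuous_timeDeriv h.reg_u) (fun t x => ?_)
    (continuous_time ((h.continuous_bernoulliHead hw).add (h.continuous_phi hw)))
    (fun t x => (hu t x).trans (le_add_of_nonneg_right (by positivity)))
    (fun t x => ?_) hd hd8 hn t x
  · rw [h.timeDeriv_velocity hw, neg_neg]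
    exact (h.hasDerivAt_bernoulliHead hw t x).add (h.hasDerivAt_phi t x)
  · rw [add_sub_cancel_right]
    exact (hhead t x).trans (le_add_of_nonneg_left hd.le)

lemma isSmallSolution (h : IsEPwSolution w n u φ) (hw : IsEnthalpy w) (hd : 0 < d)
    (hd8 : d ≤ 1 / 8) (hn : ∀ t, H1norm (n t) ≤ ENNReal.ofReal d)
    (hu : ∀ t, H1norm (u t) ≤ ENNReal.ofReal d) : IsSmallSolution w n u φ := by
  have hn_le : ∀ t x, |n t x| ≤ d := fun t =>
    abs_le_of_H1norm_le (h.reg_n.comp (contDiff_prodMk_right t)) hd.le (hn t)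
  have hu_le : ∀ t x, |u t x| ≤ d := fun t =>
    abs_le_of_H1norm_le (h.reg_u.comp (contDiff_prodMk_right t)) hd.le (hu t)
  obtain ⟨hn2, hn'2⟩ := l2Bounded_of_H1norm_le h.reg_n hd.le hn
  obtain ⟨hu2, hu'2⟩ := l2Bounded_of_H1norm_le h.reg_u hd.le hu
  have hφ : ∀ t, IsFinitePotential (n t) (φ t) := fun t =>
    IsSmallPotential.isFinitePotential ⟨h.reg_phi_space t, fun x => by linarith [h.eq_phi t x],
      fun x => by linarith [h.abs_phi_le hw hd hd8 hn_le hu_le t x]⟩ (hn2.memLp t) (hn_le t)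
  obtain ⟨A, hA⟩ := hn2.bound
  have hφ_le : ∀ t, (∫ x, φ t x ^ 2) + 2 * (∫ x, spaceDeriv φ t x ^ 2) ≤ 8 * A := fun t =>
    ((hφ t).integral_sq_add_sq_le (hn2.memLp t)).trans (by linarith [hA t])
  have hφ0 : ∀ t, 0 ≤ ∫ x, φ t x ^ 2 := fun t => integral_nonneg fun _ => sq_nonneg _
  have hφ'0 : ∀ t, 0 ≤ ∫ x, spaceDeriv φ t x ^ 2 := fun t => integral_nonneg fun _ => sq_nonneg _
  exact
    { h with
      enthalpy := hw
      abs_density_le := fun t x => (hn_le t x).trans (by linarith)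
      abs_velocity_le := fun t x => (hu_le t x).trans (by linarith)
      potential := hφ
      l2Bounded_density := hn2
      l2Bounded_velocity := hu2
      l2Bounded_spaceDeriv_density := hn'2
      l2Bounded_spaceDeriv_velocity := hu'2
      l2Bounded_phi := ⟨h.continuous_phi hw, fun t => (hφ t).memLp, 8 * A, fun t => by
        linarith [hφ_le t, hφ'0 t]⟩
      l2Bounded_spaceDeriv_phi := ⟨h.continuous_spaceDeriv_phi hw, fun t => (hφ t).memLp_deriv,
        8 * A, fun t => by linarith [hφ_le t, hφ0 t, hφ'0 t]⟩ }

end IsEPwSolution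

/-! ### Time reversal -/

section TimeReversal

variable {w : ℝ → ℝ} {n u φ : ℝ → ℝ → ℝ} {y : ℝ → ℝ}

lemma IsEPwSolution.timeReversal (h : IsEPwSolution w n u φ) :
    IsEPwSolution w (fun t => n (-t)) (fun t x => -u (-t) x) (fun t => φ (-t)) where
  dens_pos t := h.dens_pos (-t)
  reg_n := h.reg_n.comp (f := fun q : ℝ × ℝ => (-q.1, q.2)) (by fun_prop)
  reg_u := (h.reg_u.comp (f := fun q : ℝ × ℝ => (-q.1, q.2)) (by fun_prop)).neg
  reg_phi_space t := h.reg_phi_space (-t)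
  reg_phi_time x := (h.reg_phi_time x).comp contDiff_neg
  eq_n t x := by
    rw [deriv_comp_neg (fun s => n s x), h.eq_n]
    simp only [mul_neg, deriv.fun_neg]
  eq_u t x := by
    rw [deriv.fun_neg, deriv_comp_neg (fun s => u s x), h.eq_u]
    simp only [neg_sq, neg_neg]
  eq_phi t := h.eq_phi (-t)

lemma L2CompactWith.timeReversal (h : L2CompactWith n u y) :
    L2CompactWith (fun t => n (-t)) (fun t x => -u (-t) x) (fun t => y (-t)) := fun ε hε => by
  obtain ⟨R, hR, htail⟩ := h ε hε
  exact ⟨R, hR, fun t => by simpa only [neg_sq] using htail (-t)⟩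

lemma ConservesEnergy.timeReversal (h : ConservesEnergy w n u φ) :
    ConservesEnergy w (fun t => n (-t)) (fun t x => -u (-t) x) (fun t => φ (-t)) := fun s t => by
  simpa only [energy, energyDensity, neg_sq] using h (-s) (-t)

lemma H1norm_neg (f : ℝ → ℝ) : H1norm (fun x => -f x) = H1norm f := by
  have hderiv : deriv (fun x => -f x) = -deriv f := funext fun x => deriv.fun_neg
  simp only [H1norm, hderiv, eLpNorm_neg]
  rw [show (fun x => -f x) = -f from rfl, eLpNorm_neg]

end TimeReversal

/-! ### Nonexistence -/

lemma le_deriv_or_le_neg_deriv_of_le_abs_deriv {y : ℝ → ℝ} {c : ℝ} (hy : Differentiable ℝ y)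
    (hc : 0 < c) (h : ∀ t, c ≤ |deriv y t|) : (∀ t, c ≤ deriv y t) ∨ ∀ t, c ≤ -deriv y t := by
  have hne : ∀ t, deriv y t ≠ 0 := fun t => abs_pos.1 (hc.trans_le (h t))
  rcases hasDerivWithinAt_forall_lt_or_forall_gt_of_forall_ne convex_univ
    (fun t _ => (hy t).hasDerivAt.hasDerivWithinAt) (fun t _ => hne t) with hneg | hpos
  · exact .inr fun t => (h t).trans_eq (abs_of_neg (hneg t trivial))
  · exact .inl fun t => (h t).trans_eq (abs_of_pos (hpos t trivial))

lemma IsEnthalpy.exists_eq_zero_of_le_deriv {w : ℝ → ℝ} (hw : IsEnthalpy w) {ε : ℝ} (hε : 0 < ε) :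
    ∃ δ, 0 < δ ∧ ∀ (n u φ : ℝ → ℝ → ℝ) (y : ℝ → ℝ) (c : ℝ), IsEPwSolution w n u φ →
      Differentiable ℝ y → L2CompactWith n u y → ConservesEnergy w n u φ →
      √(1 + deriv w 0) + ε < c → (∀ t, c ≤ deriv y t) →
      (∀ t, H1norm (n t) ≤ ENNReal.ofReal δ) → (∀ t, H1norm (u t) ≤ ENNReal.ofReal δ) →
      ∀ t x, n t x = 0 ∧ u t x = 0 ∧ φ t x = 0 := by
  have hk := hw.deriv_pos
  have hs₀ : 0 < √(1 + deriv w 0) := Real.sqrt_pos.2 (by positivity)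
  have hσ0 : 0 ≤ √(1 + deriv w 0) + ε := by positivity
  obtain ⟨θ, hθ⟩ := exists_isSupersonicMargin hk hs₀ (Real.sq_sqrt (by positivity))
    (lt_add_of_pos_right _ hε)
  obtain ⟨d, hd, hlin⟩ := hw.exists_abs_sub_le hθ.pos
  refine ⟨min d (min θ (1 / 8)), lt_min hd (lt_min hθ.pos (by norm_num)),
    fun n u φ y c h hy hc hE hσc hspeed hn hu => ?_⟩
  set δ := min d (min θ (1 / 8))
  have hδ : 0 < δ := lt_min hd (lt_min hθ.pos (by norm_num))
  have hδθ : δ ≤ θ := (min_le_right _ _).trans (min_le_left _ _)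
  have hδ8 : δ ≤ 1 / 8 := (min_le_right _ _).trans (min_le_right _ _)
  have hn_le : ∀ t x, |n t x| ≤ δ := fun t =>
    abs_le_of_H1norm_le (h.reg_n.comp (contDiff_prodMk_right t)) hδ.le (hn t)
  have hu_le : ∀ t x, |u t x| ≤ δ := fun t =>
    abs_le_of_H1norm_le (h.reg_u.comp (contDiff_prodMk_right t)) hδ.le (hu t)
  have hsuper := hθ.isSupersonicSpeed hs₀ hσ0 hw (by linarith) hδθ
    (fun a ha => hlin a (ha.trans (min_le_left _ _))) hn_le hu_le
    (h.abs_phi_le hw hδ hδ8 hn_le hu_le)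
  exact (h.isSmallSolution hw hδ hδ8 hn hu).eq_zero_of_l2Compact hsuper hσ0 hs₀ hθ.pos hθ.le_half
    hy hc hE hσc hspeed

theorem nonexistence_fast_compact_general {w : ℝ → ℝ} (hw : IsEnthalpy w) {ε : ℝ} (hε : 0 < ε) :
    ∃ δ : ℝ, 0 < δ ∧ ∀ (n u φ : ℝ → ℝ → ℝ) (y : ℝ → ℝ), IsEPwSolution w n u φ →
      Differentiable ℝ y → L2CompactWith n u y → ConservesEnergy w n u φ →
      (∃ c : ℝ, √(1 + deriv w 0) + ε < c ∧ ∀ t : ℝ, c ≤ |deriv y t|) →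
      (⨆ t : ℝ, (H1norm (n t) + H1norm (u t))) < ENNReal.ofReal δ →
      ∀ t x : ℝ, n t x = 0 ∧ u t x = 0 ∧ φ t x = 0 := by
  obtain ⟨δ, hδ, hzero⟩ := hw.exists_eq_zero_of_le_deriv hε
  refine ⟨δ, hδ, fun n u φ y h hy hc hE ⟨c, hσc, hspeed⟩ hsup => ?_⟩
  have hH1 : ∀ t, H1norm (n t) + H1norm (u t) ≤ ENNReal.ofReal δ := fun t =>
    (le_iSup (fun t => H1norm (n t) + H1norm (u t)) t).trans hsup.le
  have hn : ∀ t, H1norm (n t) ≤ ENNReal.ofReal δ := fun t => le_self_add.trans (hH1 t)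
  have hu : ∀ t, H1norm (u t) ≤ ENNReal.ofReal δ := fun t => le_add_self.trans (hH1 t)
  have hc0 : 0 < c := lt_trans (by positivity) hσc
  rcases le_deriv_or_le_neg_deriv_of_le_abs_deriv hy hc0 hspeed with hright | hleft
  · exact hzero n u φ y c h hy hc hE hσc hright hn hu
  · intro t x
    have hreversed := hzero _ _ _ _ c h.timeReversal (hy.comp differentiable_neg)
      hc.timeReversal hE.timeReversal hσc
      (fun t => (hleft (-t)).trans_eq (deriv_comp_neg y t).symm) (fun t => hn (-t))
      (fun t => (H1norm_neg _).trans_le (hu (-t))) (-t) x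
    simpa only [neg_neg, neg_eq_zero] using hreversed

lemma IsWFor.deriv_eq {p w : ℝ → ℝ} (hw : IsWFor p w) {s : ℝ} (hs : -1 < s) :
    deriv w s = deriv p (1 + s) / (1 + s) :=
  (hw.2 s hs).deriv

lemma IsWFor.deriv_zero {p w : ℝ → ℝ} (hw : IsWFor p w) : deriv w 0 = deriv p 1 := by
  rw [hw.deriv_eq neg_one_lt_zero, add_zero, div_one]

lemma IsPressure.isEnthalpy {p w : ℝ → ℝ} (hp : IsPressure p) (hw : IsWFor p w) :
    IsEnthalpy w where
  apply_zero := hw.1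
  deriv_pos := by
    rw [hw.deriv_zero]
    exact hp.deriv_pos 1 one_pos
  contDiffOn := by
    have hmaps : Set.MapsTo (fun s : ℝ => 1 + s) (Set.Ioi (-1)) (Set.Ioi 0) := fun s hs => by
      simp only [Set.mem_Ioi] at hs ⊢
      linarith
    have hp' : ContinuousOn (deriv p) (Set.Ioi 0) :=
      hp.smooth.continuousOn_deriv_of_isOpen isOpen_Ioi (by simp)
    have hquot : ContinuousOn (fun s : ℝ => deriv p (1 + s) / (1 + s)) (Set.Ioi (-1)) :=
      (hp'.comp (by fun_prop) hmaps).div (by fun_prop) fun s hs => (hmaps hs).ne'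
    rw [← zero_add (1 : WithTop ℕ∞), contDiffOn_succ_iff_deriv_of_isOpen isOpen_Ioi]
    exact ⟨fun s hs => (hw.2 s hs).differentiableAt.differentiableWithinAt, by simp,
      contDiffOn_zero.2 (hquot.congr fun s hs => hw.deriv_eq hs)⟩

theorem nonexistence_fast_compact
    (p w : ℝ → ℝ) (hp : IsPressure p) (hw : IsWFor p w)
    (k : ℝ) (hk : k = deriv p 1)
    (ε : ℝ) (hε : 0 < ε) :
    ∃ δ : ℝ, 0 < δ ∧
      ∀ (n u φ : ℝ → ℝ → ℝ) (y : ℝ → ℝ),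
        IsEPwSolution w n u φ →
        ContDiff ℝ 1 y →
        L2CompactWith n u y →
        ConservesEnergy w n u φ →
        (∃ c : ℝ, Real.sqrt (1 + k) + ε < c ∧ ∀ t : ℝ, c ≤ |deriv y t|) →
        (⨆ t : ℝ, (H1norm (n t) + H1norm (u t))) < ENNReal.ofReal δ →
        ∀ t x : ℝ, n t x = 0 ∧ u t x = 0 ∧ φ t x = 0 := by
  rw [hk, ← hw.deriv_zero]
  exact (nonexistence_fast_compact_general (hp.isEnthalpy hw) hε).imp fun _ h =>
    ⟨h.1, fun n u φ y hsol hy => h.2 n u φ y hsol (hy.differentiable one_ne_zero)⟩
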